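/- Forrester's conjecture holds for $n \le 5$: for nonnegative integers $a,b,k,n_0,n_1$ with $n = n_0+n_1 \le 5$, $\mathrm{CT}_x \prod_{i,j=n_0+1,\,i\ne j}^{n}(1-x_i/x_j)\, H(x_0,\ldots,x_n;a,b,k) = M_{n_0}(a,b,k)\prod_{j=0}^{n_1-1}\frac{(j+1)((k+1)j+a+b+kn_0)!\,(kj+k+j+kn_0)!}{k!\,((k+1)j+a+kn_0)!\,((k+1)j+b+kn_0)!}$. -/

import Mathlib

open MvPolynomial Finset

/-- The Forrester constant term
`CT_x ∏_{n₀+1 ≤ i ≠ j ≤ n₀+n₁}(1-x_i/x_j) · H(x_0,…,x_n;a,b,k)`, where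
`H(x_0,…,x_n;a,b,k) = ∏_{l=1}^n (1-x_l/x_0)^a (1-x_0/x_l)^b ∏_{1≤i≠j≤n}(1-x_i/x_j)^k`
and `n = n₀ + n₁`.  Clearing denominators, it is the coefficient of
`x_0^(n·a) ∏_{l≤n₀} x_l^(b+(n-1)k) ∏_{l>n₀} x_l^(b+(n-1)k+n₁-1)` in
`∏_{n₀<i≠j≤n}(x_j-x_i) · ∏_{l=1}^n (x_0-x_l)^a (x_l-x_0)^b · ∏_{1≤i≠j≤n}(x_j-x_i)^k`. -/
noncomputable def forresterCT (n₀ n₁ a b k : ℕ) : ℚ :=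
  MvPolynomial.coeff
    (Finsupp.equivFunOnFinite.symm
      (Fin.cons ((n₀ + n₁) * a)
        (fun l : Fin (n₀ + n₁) =>
          b + (n₀ + n₁ - 1) * k + (if n₀ ≤ (l : ℕ) then n₁ - 1 else 0))))
    ((∏ j ∈ Finset.univ.filter (fun l : Fin (n₀ + n₁) => n₀ ≤ (l : ℕ)),
        ∏ i ∈ (Finset.univ.filter (fun l : Fin (n₀ + n₁) => n₀ ≤ (l : ℕ))).erase j,
          (X j.succ - X i.succ : MvPolynomial (Fin (n₀ + n₁ + 1)) ℚ)) *
      (∏ l : Fin (n₀ + n₁),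
        (X (0 : Fin (n₀ + n₁ + 1)) - X l.succ : MvPolynomial (Fin (n₀ + n₁ + 1)) ℚ) ^ a *
          (X l.succ - X (0 : Fin (n₀ + n₁ + 1))) ^ b) *
      ∏ j : Fin (n₀ + n₁), ∏ i ∈ Finset.univ.erase j,
        (X j.succ - X i.succ : MvPolynomial (Fin (n₀ + n₁ + 1)) ℚ) ^ k)

/-- The right-hand side of Forrester's conjecture:
`M_{n₀}(a,b,k) ∏_{j=0}^{n₁-1} (j+1)((k+1)j+a+b+kn₀)!(kj+k+j+kn₀)! /
  (k!((k+1)j+a+kn₀)!((k+1)j+b+kn₀)!)`. -/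
noncomputable def forresterRHS (n₀ n₁ a b k : ℕ) : ℚ :=
  (∏ l ∈ Finset.range n₀,
      (((a + b + k * l).factorial * (k * (l + 1)).factorial : ℚ) /
        ((a + k * l).factorial * (b + k * l).factorial * k.factorial))) *
    ∏ j ∈ Finset.range n₁,
      (((j + 1) * ((k + 1) * j + a + b + k * n₀).factorial *
          (k * j + k + j + k * n₀).factorial : ℚ) /
        (k.factorial * ((k + 1) * j + a + k * n₀).factorial *
          ((k + 1) * j + b + k * n₀).factorial))


section general
variable {σ : Type} [Fintype σ] [DecidableEq σ]

/-- linear functional with prescribed values on monomials -/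
noncomputable def phi (ψ : (σ →₀ ℕ) → ℚ) : MvPolynomial σ ℚ →ₗ[ℚ] ℚ :=
  (MvPolynomial.basisMonomials σ ℚ).constr ℚ ψ

lemma phi_monomial (ψ : (σ →₀ ℕ) → ℚ) (e : σ →₀ ℕ) (c : ℚ) :
    phi ψ (monomial e c) = c * ψ e := by
  have h : (monomial e c : MvPolynomial σ ℚ) = c • monomial e 1 := by
    rw [smul_monomial]; simp
  have h2 : phi ψ (monomial e 1) = ψ e := by
    have := (MvPolynomial.basisMonomials σ ℚ).constr_basis ℚ ψ e
    simpa [phi] using this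
  rw [h, map_smul, h2, smul_eq_mul]

lemma phi_eq_sum (ψ : (σ →₀ ℕ) → ℚ) (F : MvPolynomial σ ℚ) :
    phi ψ F = ∑ e ∈ F.support, coeff e F * ψ e := by
  conv_lhs => rw [F.as_sum]
  rw [map_sum]
  exact Finset.sum_congr rfl fun e _ => phi_monomial ψ e _

lemma phi_X_mul (ψ : (σ →₀ ℕ) → ℚ) (i : σ) (F : MvPolynomial σ ℚ) :
    phi ψ (X i * F) = phi (fun e => ψ (Finsupp.single i 1 + e)) F := by
  induction F using MvPolynomial.induction_on' with
  | monomial e c => rw [X, monomial_mul, phi_monomial, phi_monomial, one_mul]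
  | add p q hp hq => rw [mul_add, map_add, map_add, hp, hq]

/-- `Deg d f`: the `d`-th forward difference of `f` vanishes. -/
def Deg : ℕ → (ℕ → ℚ) → Prop
  | 0, f => ∀ e, f e = 0
  | d + 1, f => Deg d (fun e => f (e + 1) - f e)

/-- the weights of product type -/
noncomputable def wt (S : Finset σ) (p : σ → ℕ → ℚ) (τ : σ → ℕ → ℚ) (e : σ →₀ ℕ) : ℚ :=
  (∏ l ∈ S, p l (e l)) * ∏ l ∈ Sᶜ, τ l (e l)

/-- polynomials killed by all product weights of small degree -/
def Kil (S : Finset σ) (D : ℕ) (F : MvPolynomial σ ℚ) : Prop :=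
  ∀ (d : σ → ℕ) (p τ : σ → ℕ → ℚ), (∀ l ∈ S, Deg (d l) (p l)) →
    ((∃ l ∈ S, d l = 0) ∨ ∑ l ∈ S, (d l - 1) < D) → phi (wt S p τ) F = 0

lemma phi_wt_zero (S : Finset σ) (p τ : σ → ℕ → ℚ) (l : σ) (hl : l ∈ S) (h : Deg 0 (p l))
    (F : MvPolynomial σ ℚ) : phi (wt S p τ) F = 0 := by
  rw [phi_eq_sum]
  refine Finset.sum_eq_zero fun e _ => ?_
  have : ∏ l ∈ S, p l (e l) = 0 := Finset.prod_eq_zero hl (h _)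
  simp [wt, this]

lemma kil_zero (S : Finset σ) (F : MvPolynomial σ ℚ) : Kil S 0 F := by
  rintro d p τ hd (⟨l, hl, h0⟩ | h)
  · exact phi_wt_zero S p τ l hl (h0 ▸ hd l hl) F
  · omega

/-- one difference in direction i -/
lemma wt_shift (S : Finset σ) (p τ : σ → ℕ → ℚ) (i : σ) (hi : i ∈ S) (e : σ →₀ ℕ) :
    wt S p τ (Finsupp.single i 1 + e) - wt S p τ e =
      wt S (Function.update p i (fun x => p i (x + 1) - p i x)) τ e := by
  unfold wt
  have h1 : ∏ l ∈ Sᶜ, τ l ((Finsupp.single i 1 + e : σ →₀ ℕ) l) = ∏ l ∈ Sᶜ, τ l (e l) := by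
    refine Finset.prod_congr rfl fun l hl => ?_
    have : i ≠ l := by rintro rfl; simp [hi] at hl
    simp [Finsupp.single_apply, this]
  rw [h1, ← sub_mul, ← Finset.mul_prod_erase S _ hi, ← Finset.mul_prod_erase S _ hi,
    ← Finset.mul_prod_erase S _ hi]
  have h2 : ∏ l ∈ S.erase i, p l ((Finsupp.single i 1 + e : σ →₀ ℕ) l) =
      ∏ l ∈ S.erase i, p l (e l) := by
    refine Finset.prod_congr rfl fun l hl => ?_
    have : i ≠ l := by rintro rfl; simp at hl
    simp [Finsupp.single_apply, this]
  have h3 : ∏ l ∈ S.erase i, (Function.update p i (fun x => p i (x + 1) - p i x)) l (e l) =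
      ∏ l ∈ S.erase i, p l (e l) := by
    refine Finset.prod_congr rfl fun l hl => ?_
    have : l ≠ i := by rintro rfl; simp at hl
    simp [this]
  rw [h2, h3]
  have h4 : (Finsupp.single i 1 + e : σ →₀ ℕ) i = e i + 1 := by simp [add_comm]
  rw [h4, Function.update_self]
  ring

lemma kil_diff (S : Finset σ) (D : ℕ) (F : MvPolynomial σ ℚ) (hF : Kil S D F) (i : σ) (hi : i ∈ S)
    (d : σ → ℕ) (p τ : σ → ℕ → ℚ) (hd : ∀ l ∈ S, Deg (d l) (p l))
    (hpos : ∀ l ∈ S, d l ≠ 0) (hs : ∑ l ∈ S, (d l - 1) < D + 1) :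
    phi (wt S (Function.update p i (fun x => p i (x + 1) - p i x)) τ) F = 0 := by
  apply hF (Function.update d i (d i - 1))
  · intro l hl
    by_cases h : l = i
    · subst h
      have := hd l hl
      obtain ⟨q, hq⟩ := Nat.exists_eq_succ_of_ne_zero (hpos l hl)
      rw [hq] at this
      have h5 : Deg q (fun x => p l (x + 1) - p l x) := this
      simpa [hq] using h5
    · simpa [h] using hd l hl
  · by_cases h1 : d i = 1
    · left; exact ⟨i, hi, by simp [h1]⟩
    · right
      have h0 := hpos i hi
      rw [← Finset.add_sum_erase S _ hi] at hs ⊢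
      have : ∑ l ∈ S.erase i, (Function.update d i (d i - 1) l - 1) =
          ∑ l ∈ S.erase i, (d l - 1) := by
        refine Finset.sum_congr rfl fun l hl => ?_
        have : l ≠ i := by rintro rfl; simp at hl
        simp [this]
      rw [this]
      simp
      omega

lemma kil_mul (S : Finset σ) (D : ℕ) (F : MvPolynomial σ ℚ) (hF : Kil S D F) (i j : σ)
    (hi : i ∈ S) (hj : j ∈ S) : Kil S (D + 1) ((X i - X j) * F) := by
  intro d p τ hd h
  by_cases h0 : ∃ l ∈ S, d l = 0
  · obtain ⟨l, hl, h0⟩ := h0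
    exact phi_wt_zero S p τ l hl (h0 ▸ hd l hl) _
  · have hs := h.resolve_left h0
    push Not at h0
    have a1 := kil_diff S D F hF i hi d p τ hd h0 hs
    have a2 := kil_diff S D F hF j hj d p τ hd h0 hs
    rw [sub_mul, map_sub, phi_X_mul, phi_X_mul]
    have b1 : ∀ i ∈ S, phi (wt S (Function.update p i (fun x => p i (x + 1) - p i x)) τ) F =
        phi (fun e => wt S p τ (Finsupp.single i 1 + e)) F - phi (wt S p τ) F := by
      intro i hi
      rw [phi_eq_sum, phi_eq_sum, phi_eq_sum, ← Finset.sum_sub_distrib]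
      refine Finset.sum_congr rfl fun e _ => ?_
      rw [← wt_shift S p τ i hi]; ring
    rw [b1 i hi] at a1
    rw [b1 j hj] at a2
    linarith

lemma kil_pow (S : Finset σ) (D : ℕ) (F : MvPolynomial σ ℚ) (hF : Kil S D F) (i j : σ)
    (hi : i ∈ S) (hj : j ∈ S) (q : ℕ) : Kil S (D + q) ((X i - X j) ^ q * F) := by
  induction q with
  | zero => simpa using hF
  | succ q ih =>
    rw [pow_succ', mul_assoc, ← add_assoc]
    exact kil_mul S _ _ ih i j hi hj

lemma kil_prod (S : Finset σ) (F : MvPolynomial σ ℚ) (κ : σ × σ → ℕ) (s : Finset (σ × σ))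
    (hs : ∀ p ∈ s, p.1 ∈ S ∧ p.2 ∈ S) :
    Kil S (∑ p ∈ s, κ p) ((∏ p ∈ s, (X p.1 - X p.2) ^ κ p) * F) := by
  induction s using Finset.induction_on with
  | empty => simpa using kil_zero S F
  | insert p s hp ih =>
    rw [Finset.prod_insert hp, Finset.sum_insert hp, mul_assoc, add_comm]
    have h1 := hs p (Finset.mem_insert_self _ _)
    exact kil_pow S _ _ (ih fun q hq => hs q (Finset.mem_insert_of_mem hq)) _ _ h1.1 h1.2 _

/-- degree bound in the variables of `T` -/
def TD (T : Finset σ) (d : ℕ) (F : MvPolynomial σ ℚ) : Prop :=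
  ∀ e ∈ F.support, ∑ l ∈ T, e l ≤ d

lemma td_mul (T : Finset σ) (d d' : ℕ) (F F' : MvPolynomial σ ℚ) (h : TD T d F) (h' : TD T d' F') :
    TD T (d + d') (F * F') := by
  intro e he
  have := MvPolynomial.support_mul F F' he
  obtain ⟨u, hu, v, hv, rfl⟩ := Finset.mem_add.1 this
  simp only [Finsupp.add_apply, Finset.sum_add_distrib]
  exact add_le_add (h u hu) (h' v hv)

lemma td_one (T : Finset σ) : TD T 0 (1 : MvPolynomial σ ℚ) := by
  intro e he
  have : e = 0 := by simpa using (MvPolynomial.support_monomial_subset (s := 0) (a := (1:ℚ)) he)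
  simp [this]

lemma td_pow (T : Finset σ) (d : ℕ) (F : MvPolynomial σ ℚ) (h : TD T d F) (q : ℕ) :
    TD T (q * d) (F ^ q) := by
  induction q with
  | zero => simpa using td_one T
  | succ q ih => rw [pow_succ, Nat.succ_mul]; exact td_mul _ _ _ _ _ ih h

lemma td_prod {ι : Type} [DecidableEq ι] (T : Finset σ) (s : Finset ι) (f : ι → MvPolynomial σ ℚ) (d : ι → ℕ)
    (h : ∀ p ∈ s, TD T (d p) (f p)) : TD T (∑ p ∈ s, d p) (∏ p ∈ s, f p) := by
  induction s using Finset.induction_on with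
  | empty => simpa using td_one T
  | insert p s hp ih =>
    rw [Finset.prod_insert hp, Finset.sum_insert hp]
    exact td_mul _ _ _ _ _ (h p (Finset.mem_insert_self _ _))
      (ih fun q hq => h q (Finset.mem_insert_of_mem hq))

lemma td_X_sub (T : Finset σ) (i j : σ) :
    TD T (if i ∈ T ∨ j ∈ T then 1 else 0) (X i - X j : MvPolynomial σ ℚ) := by
  intro e he
  have hX : ∀ i : σ, e ∈ (X i : MvPolynomial σ ℚ).support → e = Finsupp.single i 1 := by
    intro i hi
    simpa [support_X] using hi
  have key : ∀ i : σ, ∑ l ∈ T, (Finsupp.single i 1 : σ →₀ ℕ) l = if i ∈ T then 1 else 0 := by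
    intro i
    simp [Finsupp.single_apply]
  rcases Finset.mem_union.1 (MvPolynomial.support_sub σ _ _ he) with h | h
  · rw [hX _ h, key]; split_ifs <;> simp_all
  · rw [hX _ h, key]; split_ifs <;> simp_all

/-- exponents -/
def kap (B : Finset σ) (k : ℕ) (p : σ × σ) : ℕ := k + if p.1 ∈ B ∧ p.2 ∈ B then 1 else 0

/-- the main polynomial -/
noncomputable def GG (B : Finset σ) (k : ℕ) : MvPolynomial σ ℚ :=
  ∏ p ∈ (univ : Finset σ).offDiag, (X p.1 - X p.2) ^ kap B k p

/-- total exponent inside S -/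
def KK (B : Finset σ) (k : ℕ) (S : Finset σ) : ℕ := ∑ p ∈ S.offDiag, kap B k p

lemma KK_eq (B : Finset σ) (k : ℕ) (S : Finset σ) :
    KK B k S = #S * (#S - 1) * k + #(S ∩ B) * (#(S ∩ B) - 1) := by
  unfold KK kap
  have : S.offDiag.filter (fun p => p.1 ∈ B ∧ p.2 ∈ B) = (S ∩ B).offDiag := by
    ext ⟨x, y⟩; simp only [Finset.mem_filter, Finset.mem_offDiag, Finset.mem_inter]; tauto
  rw [Finset.sum_add_distrib, Finset.sum_const, smul_eq_mul, Finset.sum_ite, Finset.sum_const_zero,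
    this]
  simp [Finset.offDiag_card, Nat.mul_sub]

lemma GG_split (B : Finset σ) (k : ℕ) (S : Finset σ) :
    GG B k = (∏ p ∈ S.offDiag, (X p.1 - X p.2) ^ kap B k p) *
      ∏ p ∈ (univ : Finset σ).offDiag \ S.offDiag, (X p.1 - X p.2) ^ kap B k p := by
  unfold GG
  rw [mul_comm, Finset.prod_sdiff (Finset.offDiag_mono (Finset.subset_univ S))]

lemma GG_kil (B : Finset σ) (k : ℕ) (S : Finset σ) : Kil S (KK B k S) (GG B k) := by
  rw [GG_split B k S]
  exact kil_prod S _ _ _ fun p hp => by simp only [Finset.mem_offDiag] at hp; tauto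

lemma GG_td (B : Finset σ) (k : ℕ) (S : Finset σ) :
    TD Sᶜ (KK B k univ - KK B k S) (GG B k) := by
  rw [GG_split B k S]
  have h1 : TD Sᶜ 0 (∏ p ∈ S.offDiag, (X p.1 - X p.2 : MvPolynomial σ ℚ) ^ kap B k p) := by
    have := td_prod Sᶜ S.offDiag (fun p => (X p.1 - X p.2 : MvPolynomial σ ℚ) ^ kap B k p)
      (fun _ => 0) (fun p hp => by
        have a := td_pow _ _ _ (td_X_sub Sᶜ p.1 p.2) (kap B k p)
        simp only [Finset.mem_offDiag] at hp
        simpa [hp.1, hp.2.1] using a)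
    simpa using this
  have h2 : TD Sᶜ (∑ p ∈ (univ : Finset σ).offDiag \ S.offDiag, kap B k p)
      (∏ p ∈ (univ : Finset σ).offDiag \ S.offDiag,
        (X p.1 - X p.2 : MvPolynomial σ ℚ) ^ kap B k p) := by
    apply td_prod
    intro p hp
    have a := td_pow _ _ _ (td_X_sub Sᶜ p.1 p.2) (kap B k p)
    intro e he
    refine (a e he).trans ?_
    split_ifs <;> simp
  have h3 := td_mul _ _ _ _ _ h1 h2
  have h4 := Finset.sum_sdiff (f := kap B k) (Finset.offDiag_mono (Finset.subset_univ S))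
  intro e he
  have := h3 e he
  unfold KK
  omega

lemma GG_deg (B : Finset σ) (k : ℕ) : (GG B k).IsHomogeneous (KK B k univ) := by
  unfold GG KK
  apply IsHomogeneous.prod
  intro p _
  have := ((isHomogeneous_X ℚ p.1).sub (isHomogeneous_X ℚ p.2)).pow (kap B k p)
  simpa using this

lemma GG_sum (B : Finset σ) (k : ℕ) (e : σ →₀ ℕ) (he : e ∈ (GG B k).support) :
    ∑ l, e l = KK B k univ := by
  have h := GG_deg B k (mem_support_iff.1 he)
  rw [← h, Finsupp.weight_apply, Finsupp.sum_fintype _ _ (by simp)]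
  simp

/-- abstract vanishing -/
lemma phi_GG_zero (B : Finset σ) (k : ℕ) (w1 wi : σ → ℕ → ℚ) (N : σ → ℕ) (m : ℤ)
    (h1 : ∀ l, Deg m.toNat (w1 l))
    (h2 : ∀ l e, wi l e ≠ 0 → (N l : ℤ) + m ≤ e)
    (hnum : ∀ S : Finset σ, (KK B k univ : ℤ) - KK B k S < ∑ l ∈ Sᶜ, ((N l : ℤ) + m) ∨
      (#S : ℤ) * (m - 1) < KK B k S) :
    phi (fun e => ∏ l, (w1 l (e l) + wi l (e l))) (GG B k) = 0 := by
  have hexp : ∀ e : σ →₀ ℕ, ∏ l, (w1 l (e l) + wi l (e l)) =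
      ∑ S ∈ (univ : Finset σ).powerset, wt S w1 wi e := by
    intro e
    rw [Finset.prod_add]
    refine Finset.sum_congr rfl fun S _ => ?_
    rw [wt, Finset.compl_eq_univ_sdiff]
  have : phi (fun e => ∏ l, (w1 l (e l) + wi l (e l))) (GG B k) =
      ∑ S ∈ (univ : Finset σ).powerset, phi (wt S w1 wi) (GG B k) := by
    simp only [phi_eq_sum]
    rw [Finset.sum_comm]
    refine Finset.sum_congr rfl fun e _ => ?_
    rw [hexp, Finset.mul_sum]
  rw [this]
  refine Finset.sum_eq_zero fun S _ => ?_
  rcases hnum S with h | h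
  · rw [phi_eq_sum]
    refine Finset.sum_eq_zero fun e he => ?_
    have hd := GG_td B k S e he
    by_cases hz : ∃ l ∈ Sᶜ, wi l (e l) = 0
    · obtain ⟨l, hl, hl0⟩ := hz
      have : ∏ l ∈ Sᶜ, wi l (e l) = 0 := Finset.prod_eq_zero hl hl0
      simp [wt, this]
    · push Not at hz
      exfalso
      have a1 : ∑ l ∈ Sᶜ, ((N l : ℤ) + m) ≤ ∑ l ∈ Sᶜ, (e l : ℤ) :=
        Finset.sum_le_sum fun l hl => h2 l _ (hz l hl)
      have a2 : KK B k S ≤ KK B k univ :=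
        Finset.sum_le_sum_of_subset (Finset.offDiag_mono (Finset.subset_univ S))
      have a3 : ∑ l ∈ Sᶜ, (e l : ℤ) = ((∑ l ∈ Sᶜ, e l : ℕ) : ℤ) := by push_cast; rfl
      omega
  · apply GG_kil B k S (fun _ => m.toNat) w1 wi (fun l _ => h1 l)
    rcases S.eq_empty_or_nonempty with rfl | hS
    · simp [KK] at h
    · by_cases hm : m ≤ 0
      · left
        obtain ⟨l, hl⟩ := hS
        exact ⟨l, hl, by omega⟩
      · right
        rw [Finset.sum_const, smul_eq_mul]
        have : ((m.toNat - 1 : ℕ) : ℤ) = m - 1 := by omega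
        zify
        rw [this]
        exact h
end general


section weights

/-- `(-1)^d * binom c d` -/
noncomputable def wq (c : ℚ) (d : ℕ) : ℚ := ∏ i ∈ range d, (((i : ℚ) - c) / (i + 1))

lemma wq_succ (c : ℚ) (d : ℕ) : wq c (d + 1) = wq c d * (((d : ℚ) - c) / (d + 1)) := by
  rw [wq, Finset.prod_range_succ]; rfl

lemma wq_nat (c d : ℕ) : wq (c : ℚ) d = (-1) ^ d * (c.choose d : ℚ) := by
  induction d with
  | zero => simp [wq]
  | succ d ih =>
    rw [wq_succ, ih]
    have h : (c.choose (d + 1) : ℚ) * (d + 1) = c.choose d * ((c : ℚ) - d) := by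
      have := Nat.choose_succ_right_eq c d
      by_cases hd : d ≤ c
      · have h2 : ((c - d : ℕ) : ℚ) = (c : ℚ) - d := by push_cast [hd]; ring
        rw [← h2]; exact_mod_cast this
      · rw [Nat.choose_eq_zero_of_lt (by omega), Nat.choose_eq_zero_of_lt (by omega)]; simp
    have hd : (d : ℚ) + 1 ≠ 0 := by positivity
    field_simp
    rw [pow_succ]
    linear_combination (-1) * (-1) ^ d * (-1) * h

lemma wq_nat_zero (c d : ℕ) (h : c < d) : wq (c : ℚ) d = 0 := by
  rw [wq_nat, Nat.choose_eq_zero_of_lt h]; simp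

lemma wq_neg (m d : ℕ) : wq (-((m : ℚ) + 1)) d = ((d + m).choose m : ℚ) := by
  induction d with
  | zero => simp [wq]
  | succ d ih =>
    rw [wq_succ, ih]
    have h : ((d + 1 + m).choose m : ℚ) * (d + 1) = ((d + m).choose m) * ((d : ℚ) + m + 1) := by
      have h1 := Nat.choose_mul_succ_eq (d + m) m
      have h2 : d + m + 1 - m = d + 1 := by omega
      rw [h2] at h1
      rw [show d + 1 + m = d + m + 1 by ring]
      exact_mod_cast h1.symm
    have hd : (d : ℚ) + 1 ≠ 0 := by positivity
    field_simp
    linear_combination -h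

/-- polynomial weight -/
noncomputable def w1 (m N e : ℕ) : ℚ :=
  match m with
  | 0 => 0
  | m + 1 => ((Ring.choose ((N : ℤ) - e + m) m : ℤ) : ℚ)

lemma deg_zero (d : ℕ) (f : ℕ → ℚ) (h : ∀ e, f e = 0) : Deg d f := by
  induction d generalizing f with
  | zero => exact h
  | succ d ih => exact ih _ fun e => by simp [h]

lemma deg_neg (d : ℕ) (f : ℕ → ℚ) (h : Deg d f) : Deg d (fun e => - f e) := by
  induction d generalizing f with
  | zero => intro e; simp [h e]
  | succ d ih =>
    have h' : Deg d (fun e => f (e + 1) - f e) := h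
    have := ih _ h'
    change Deg d _
    convert this using 2
    ring

lemma deg_choose (d : ℕ) (z : ℤ) :
    Deg (d + 1) (fun e : ℕ => ((Ring.choose (z - e) d : ℤ) : ℚ)) := by
  induction d generalizing z with
  | zero => intro e; simp
  | succ d ih =>
    have h := deg_neg _ _ (ih (z - 1))
    change Deg (d + 1) (fun e : ℕ => ((Ring.choose (z - (e + 1 : ℕ)) (d + 1) : ℤ) : ℚ) -
      ((Ring.choose (z - e) (d + 1) : ℤ) : ℚ))
    convert h using 2 with e
    have := Ring.choose_succ_succ (z - 1 - e : ℤ) d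
    have e1 : (z - 1 - e : ℤ) + 1 = z - e := by ring
    have e2 : (z - ((e + 1 : ℕ) : ℤ) : ℤ) = z - 1 - e := by push_cast; ring
    rw [e1] at this
    rw [this, e2]
    push_cast
    ring

lemma deg_w1 (m N : ℕ) : Deg m (w1 m N) := by
  cases m with
  | zero => intro e; rfl
  | succ m =>
    have := deg_choose m ((N : ℤ) + m)
    convert this using 2 with e
    simp only [w1]
    congr 2
    ring

/-- full weight -/
noncomputable def Wt (c : ℚ) (N e : ℕ) : ℚ := if e ≤ N then wq c (N - e) else 0

lemma Wt_split (m : ℤ) (N e : ℕ) (h : Wt (-m : ℤ) N e - w1 m.toNat N e ≠ 0) : (N : ℤ) + m ≤ e := by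
  by_contra hlt
  push Not at hlt
  apply h
  by_cases hm : m ≤ 0
  · obtain ⟨q, hq⟩ := Int.eq_ofNat_of_zero_le (show 0 ≤ -m by omega)
    have h0 : m.toNat = 0 := by omega
    rw [h0, hq]
    have : w1 0 N e = 0 := rfl
    rw [this, Wt, if_pos (by omega)]
    have := wq_nat_zero q (N - e) (by omega)
    simpa using this
  · obtain ⟨q, hq⟩ := Int.eq_ofNat_of_zero_le (show 0 ≤ m - 1 by omega)
    have h0 : m.toNat = q + 1 := by omega
    have hm' : m = q + 1 := by omega
    rw [h0]
    have hw : w1 (q + 1) N e = ((Ring.choose ((N : ℤ) - e + q) q : ℤ) : ℚ) := rfl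
    obtain ⟨t, ht⟩ := Int.eq_ofNat_of_zero_le (show 0 ≤ (N : ℤ) - e + q by omega)
    rw [hw, ht]
    have h3 : (Ring.choose ((t : ℕ) : ℤ) q : ℤ) = (t.choose q : ℕ) := Ring.choose_natCast t q
    have h3' : (Ring.choose (Int.ofNat t) q : ℤ) = (t.choose q : ℕ) := h3
    first | rw [h3] | rw [h3']
    unfold Wt
    split_ifs with hle
    · have h4 : ((-m : ℤ) : ℚ) = -((q : ℚ) + 1) := by rw [hm']; push_cast; ring
      rw [h4, wq_neg]
      have : N - e + q = t := by omega
      rw [this]; simp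
    · rw [Nat.choose_eq_zero_of_lt (by omega)]; simp

end weights

section general
variable {σ : Type} [Fintype σ] [DecidableEq σ]

lemma one_sub_X_pow (l : σ) (c : ℕ) :
    (1 - X l : MvPolynomial σ ℚ) ^ c = ∑ d ∈ range (c + 1), C (wq c d) * X l ^ d := by
  rw [sub_eq_add_neg, add_comm, add_pow]
  refine Finset.sum_congr rfl fun d _ => ?_
  rw [wq_nat, neg_pow]
  simp
  ring

lemma coeff_prod_one_sub (c : ℕ) (N : σ →₀ ℕ) :
    coeff N (∏ l, (1 - X l : MvPolynomial σ ℚ) ^ c) = ∏ l, wq c (N l) := by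
  simp only [one_sub_X_pow]
  rw [Finset.prod_univ_sum, coeff_sum]
  have hterm : ∀ f : σ → ℕ, (∏ l, (C (wq c (f l)) * X l ^ f l : MvPolynomial σ ℚ)) =
      monomial (Finsupp.equivFunOnFinite.symm f) (∏ l, wq c (f l)) := by
    intro f
    rw [Finset.prod_mul_distrib, monomial_eq, map_prod]
    congr 1
    rw [Finsupp.prod_fintype _ _ (by simp)]
    rfl
  simp only [hterm, coeff_monomial]
  by_cases h : ∀ l, N l ≤ c
  · rw [Finset.sum_eq_single (N : σ → ℕ)]
    · rw [if_pos]; ext l; rfl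
    · intro f _ hf
      rw [if_neg]
      rintro rfl
      exact hf rfl
    · intro h2
      exfalso; apply h2
      rw [Fintype.mem_piFinset]
      intro l
      have := h l
      rw [Finset.mem_range]; omega
  · push Not at h
    obtain ⟨l, hl⟩ := h
    rw [Finset.prod_eq_zero (Finset.mem_univ l) (wq_nat_zero _ _ hl)]
    refine Finset.sum_eq_zero fun f hf => ?_
    rw [if_neg]
    rintro rfl
    rw [Fintype.mem_piFinset] at hf
    have := hf l
    rw [Finset.mem_range] at this
    simp at hl
    omega

lemma coeff_mul_one_sub (c : ℕ) (N : σ → ℕ) (F : MvPolynomial σ ℚ) :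
    coeff (Finsupp.equivFunOnFinite.symm N) (F * ∏ l, (1 - X l : MvPolynomial σ ℚ) ^ c) =
      phi (fun e => ∏ l, Wt c (N l) (e l)) F := by
  induction F using MvPolynomial.induction_on' with
  | monomial e r =>
    rw [phi_monomial, coeff_monomial_mul']
    split_ifs with h
    · rw [coeff_prod_one_sub]
      congr 1
      refine Finset.prod_congr rfl fun l _ => ?_
      have := h l
      rw [Wt, if_pos (by simpa using this)]
      simp
    · have : ∃ l, ¬ e l ≤ N l := by
        by_contra h2
        push Not at h2
        exact h fun l => by simpa using h2 l
      obtain ⟨l, hl⟩ := this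
      rw [Finset.prod_eq_zero (Finset.mem_univ l), mul_zero]
      rw [Wt, if_neg hl]
  | add p q hp hq => rw [add_mul, coeff_add, map_add, hp, hq]

/-- exponent -/
def NN (B : Finset σ) (k b : ℕ) (l : σ) : ℕ :=
  b + (Fintype.card σ - 1) * k + if l ∈ B then #B - 1 else 0

lemma NN_sum (B : Finset σ) (k b : ℕ) (T : Finset σ) : ∑ l ∈ T, NN B k b l =
    #T * (b + (Fintype.card σ - 1) * k) + #(T ∩ B) * (#B - 1) := by
  unfold NN
  rw [Finset.sum_add_distrib, Finset.sum_const, smul_eq_mul, Finset.sum_ite, Finset.sum_const_zero,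
    add_zero, Finset.sum_const, smul_eq_mul, Finset.filter_mem_eq_inter]

lemma NN_sum_univ (B : Finset σ) (k b : ℕ) :
    ∑ l, NN B k b l = Fintype.card σ * b + KK B k univ := by
  rw [NN_sum, KK_eq]
  simp
  ring

/-- the constant term -/
noncomputable def CT (B : Finset σ) (a b k : ℕ) : ℚ :=
  coeff (Finsupp.equivFunOnFinite.symm (NN B k b))
    (GG B k * ∏ l, ((1 - X l : MvPolynomial σ ℚ) ^ a * (X l - 1) ^ b))

lemma CT_eq_phi (B : Finset σ) (a b k : ℕ) :
    CT B a b k = (-1) ^ (Fintype.card σ * b) *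
      phi (fun e => ∏ l, Wt ((a + b : ℕ) : ℚ) (NN B k b l) (e l)) (GG B k) := by
  rw [← coeff_mul_one_sub, CT]
  have : ∏ l, ((1 - X l : MvPolynomial σ ℚ) ^ a * (X l - 1) ^ b) =
      C ((-1) ^ (Fintype.card σ * b)) * ∏ l : σ, (1 - X l : MvPolynomial σ ℚ) ^ (a + b) := by
    have h1 : ∀ l : σ, ((1 - X l : MvPolynomial σ ℚ) ^ a * (X l - 1) ^ b) =
        (-1) ^ b * (1 - X l) ^ (a + b) := by
      intro l
      rw [← neg_sub (1 : MvPolynomial σ ℚ) (X l), neg_pow (1 - X l : MvPolynomial σ ℚ) b, pow_add]; ring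
    simp only [h1]
    rw [Finset.prod_mul_distrib, Finset.prod_const, Finset.card_univ, ← pow_mul, mul_comm b]
    simp
  rw [this, mul_left_comm, coeff_C_mul]

lemma CT_zero_b (B : Finset σ) (b k : ℕ) : CT B 0 b k = CT B 0 0 k := by
  have key : ∀ b, CT B 0 b k =
      coeff (Finsupp.equivFunOnFinite.symm (NN B k 0)) (GG B k) := by
    intro b
    rw [CT_eq_phi, phi_eq_sum]
    have hN : ∀ l, NN B k b l = NN B k 0 l + b := by intro l; unfold NN; ring
    rw [Finset.sum_eq_single (Finsupp.equivFunOnFinite.symm (NN B k 0))]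
    · have : ∀ l, Wt ((0 + b : ℕ) : ℚ) (NN B k b l)
          ((Finsupp.equivFunOnFinite.symm (NN B k 0)) l) = (-1) ^ b := by
        intro l
        rw [hN]
        simp only [Finsupp.coe_equivFunOnFinite_symm]
        rw [Wt, if_pos (by omega)]
        rw [wq_nat]
        simp
      simp only [this]
      rw [Finset.prod_const, Finset.card_univ, ← pow_mul, mul_comm b]
      rw [mul_left_comm, ← pow_add, ← two_mul, pow_mul]
      simp
    · intro e he hne
      have hs := GG_sum B k e he
      have hs2 := NN_sum_univ B k 0
      have : ∃ l, e l < NN B k 0 l := by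
        by_contra h
        push Not at h
        apply hne
        have h3 : ∀ l ∈ (univ : Finset σ), NN B k 0 l = e l := by
          rw [← Finset.sum_eq_sum_iff_of_le (fun l _ => h l), hs, hs2]; simp
        ext l
        simpa using (h3 l (Finset.mem_univ l)).symm
      obtain ⟨l, hl⟩ := this
      rw [Finset.prod_eq_zero (Finset.mem_univ l), mul_zero]
      rw [Wt, hN, if_pos (by omega)]
      apply wq_nat_zero
      omega
    · intro h
      rw [notMem_support_iff.1 h, zero_mul]
  rw [key, key]

/-- polynomial weight in c -/
noncomputable def wqP (d : ℕ) : Polynomial ℚ :=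
  ∏ i ∈ range d, (Polynomial.C ((1 : ℚ) / (i + 1)) * (Polynomial.C (i : ℚ) - Polynomial.X))

lemma wqP_eval (d : ℕ) (c : ℚ) : (wqP d).eval c = wq c d := by
  rw [wqP, wq, Polynomial.eval_prod]
  refine Finset.prod_congr rfl fun i _ => ?_
  simp
  ring

lemma wqP_deg (d : ℕ) : (wqP d).natDegree ≤ d := by
  refine (Polynomial.natDegree_prod_le _ _).trans ?_
  refine (Finset.sum_le_card_nsmul _ _ 1 fun i _ => ?_).trans (by simp)
  refine (Polynomial.natDegree_C_mul_le _ _).trans ?_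
  compute_degree

noncomputable def WtP (N e : ℕ) : Polynomial ℚ := if e ≤ N then wqP (N - e) else 0

lemma WtP_eval (N e : ℕ) (c : ℚ) : (WtP N e).eval c = Wt c N e := by
  unfold WtP Wt; split_ifs <;> simp [wqP_eval]

/-- the constant term as a polynomial in c = a + b -/
noncomputable def CTP (B : Finset σ) (b k : ℕ) : Polynomial ℚ :=
  Polynomial.C ((-1) ^ (Fintype.card σ * b)) * ∑ e ∈ (GG B k).support,
    Polynomial.C (coeff e (GG B k)) * ∏ l, WtP (NN B k b l) (e l)

lemma CTP_eval (B : Finset σ) (b k : ℕ) (c : ℚ) : (CTP B b k).eval c =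
    (-1) ^ (Fintype.card σ * b) * phi (fun e => ∏ l, Wt c (NN B k b l) (e l)) (GG B k) := by
  rw [CTP, phi_eq_sum]
  simp [Polynomial.eval_finset_sum, Polynomial.eval_prod, WtP_eval]

lemma CTP_deg (B : Finset σ) (b k : ℕ) : (CTP B b k).natDegree ≤ Fintype.card σ * b := by
  refine (Polynomial.natDegree_C_mul_le _ _).trans ?_
  apply Polynomial.natDegree_sum_le_of_forall_le
  intro e he
  refine (Polynomial.natDegree_C_mul_le _ _).trans ?_
  by_cases h : ∀ l, e l ≤ NN B k b l
  · refine (Polynomial.natDegree_prod_le _ _).trans ?_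
    have h1 : ∑ l, (WtP (NN B k b l) (e l)).natDegree ≤ ∑ l, (NN B k b l - e l) := by
      refine Finset.sum_le_sum fun l _ => ?_
      rw [WtP, if_pos (h l)]
      exact wqP_deg _
    refine h1.trans ?_
    have h2 : ∑ l, (NN B k b l - e l) + ∑ l, e l = ∑ l, NN B k b l := by
      rw [← Finset.sum_add_distrib]
      exact Finset.sum_congr rfl fun l _ => by have := h l; omega
    rw [NN_sum_univ, GG_sum B k e he] at h2
    omega
  · push Not at h
    obtain ⟨l, hl⟩ := h
    rw [Finset.prod_eq_zero (Finset.mem_univ l)]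
    · simp
    · rw [WtP, if_neg (by omega)]

/-- numeric condition -/
def NumC (n0 n1 k b h : ℕ) : Prop := ∀ s0 s1 t0 t1 : ℕ, s0 + t0 = n0 → s1 + t1 = n1 →
  (((t0 + t1) * (s0 + s1) * k + t1 * s1 : ℕ) : ℤ) < ((t0 + t1) * h : ℕ) ∨
  ((s0 + s1 : ℕ) : ℤ) * ((h : ℤ) - b - 1) < ((s0 + s1) * (s0 + s1 - 1) * k + s1 * (s1 - 1) : ℕ)

lemma num_T (s0 s1 t0 t1 k b : ℕ) (h : ℤ) 
    (H : (((t0 + t1) * (s0 + s1) * k + t1 * s1 : ℕ) : ℤ) < (t0 + t1 : ℕ) * h) :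
    (((s0 + t0 + (s1 + t1)) * (s0 + t0 + (s1 + t1) - 1) * k + (s1 + t1) * (s1 + t1 - 1) : ℕ) : ℤ)
      - ((s0 + s1) * (s0 + s1 - 1) * k + s1 * (s1 - 1) : ℕ)
    < ((t0 + t1) * (b + (s0 + t0 + (s1 + t1) - 1) * k) + t1 * (s1 + t1 - 1) : ℕ)
      + (t0 + t1 : ℕ) * (h - b) := by
  have hp : ∀ n : ℕ, ((n * (n - 1) : ℕ) : ℤ) = n * (n - 1) := by
    intro n; cases n <;> simp
  have ht : t0 + t1 ≠ 0 := by
    intro h0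
    rw [h0] at H
    simp at H
    have := Int.natCast_nonneg (t1 * s1)
    push_cast at this
    omega
  have h1 : ((s0 + t0 + (s1 + t1) - 1 : ℕ) : ℤ) = s0 + t0 + (s1 + t1) - 1 := by omega
  have h2 : ((t1 * (s1 + t1 - 1) : ℕ) : ℤ) = t1 * ((s1 : ℤ) + t1 - 1) := by
    cases t1 with
    | zero => simp
    | succ t => push_cast [show s1 + (t + 1) - 1 = s1 + t by omega]; ring
  have e1 := hp (s0 + t0 + (s1 + t1))
  have e2 := hp (s1 + t1)
  have e3 := hp (s0 + s1)
  have e4 := hp s1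
  have f1 : (((s0 + t0 + (s1 + t1)) * (s0 + t0 + (s1 + t1) - 1) * k +
      (s1 + t1) * (s1 + t1 - 1) : ℕ) : ℤ) = ((s0 + t0 + (s1 + t1) : ℕ) : ℤ) *
      (((s0 + t0 + (s1 + t1) : ℕ) : ℤ) - 1) * k +
      ((s1 + t1 : ℕ) : ℤ) * (((s1 + t1 : ℕ) : ℤ) - 1) := by
    rw [← e1, ← e2, ← Nat.cast_mul, ← Nat.cast_add]
  have f2 : (((s0 + s1) * (s0 + s1 - 1) * k + s1 * (s1 - 1) : ℕ) : ℤ) =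
      ((s0 + s1 : ℕ) : ℤ) * (((s0 + s1 : ℕ) : ℤ) - 1) * k + (s1 : ℤ) * ((s1 : ℤ) - 1) := by
    rw [← e3, ← e4, ← Nat.cast_mul, ← Nat.cast_add]
  have f3 : (((t0 + t1) * (b + (s0 + t0 + (s1 + t1) - 1) * k) + t1 * (s1 + t1 - 1) : ℕ) : ℤ) =
      ((t0 : ℤ) + t1) * (b + ((s0 : ℤ) + t0 + (s1 + t1) - 1) * k) + t1 * ((s1 : ℤ) + t1 - 1) := by
    rw [← h2, ← h1]; push_cast; ring
  rw [f1, f2, f3]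
  push_cast at H ⊢
  nlinarith [H]

lemma CTP_root (B : Finset σ) (b k h : ℕ) (hnum : NumC (#Bᶜ) (#B) k b h) :
    (CTP B b k).eval ((b : ℚ) - h) = 0 := by
  rw [CTP_eval]
  have hc : ((b : ℚ) - h) = ((-((h : ℤ) - b) : ℤ) : ℚ) := by push_cast; ring
  rw [hc]
  set m : ℤ := (h : ℤ) - b with hm
  have := phi_GG_zero B k (fun l => w1 m.toNat (NN B k b l))
    (fun l e => Wt (-m : ℤ) (NN B k b l) e - w1 m.toNat (NN B k b l) e) (NN B k b) m
    (fun l => deg_w1 _ _) (fun l e he => Wt_split m _ _ he) ?_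
  · simp only [add_sub_cancel] at this
    rw [this, mul_zero]
  · intro S
    have c1 : #(S ∩ Bᶜ) + #(Sᶜ ∩ Bᶜ) = #Bᶜ := by
      rw [← Finset.card_inter_add_card_sdiff Bᶜ S, Finset.inter_comm, Finset.sdiff_eq_inter_compl,
        Finset.inter_comm Sᶜ]
    have c2 : #(S ∩ B) + #(Sᶜ ∩ B) = #B := by
      rw [← Finset.card_inter_add_card_sdiff B S, Finset.inter_comm, Finset.sdiff_eq_inter_compl,
        Finset.inter_comm Sᶜ]
    have c3 : ∀ T : Finset σ, #T = #(T ∩ Bᶜ) + #(T ∩ B) := by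
      intro T
      rw [← Finset.card_inter_add_card_sdiff T B, Finset.sdiff_eq_inter_compl, add_comm]
    have c4 : Fintype.card σ = #Bᶜ + #B := by
      rw [Finset.card_compl, Nat.sub_add_cancel (Finset.card_le_univ _)]
    have c5 : #(univ : Finset σ) = #Bᶜ + #B := by rw [← c4]; rfl
    rcases hnum _ _ _ _ c1 c2 with H | H
    · left
      have := num_T _ _ _ _ k b h (by push_cast at H ⊢; exact H)
      rw [KK_eq, KK_eq, Finset.univ_inter, Finset.sum_add_distrib, ← Nat.cast_sum, NN_sum, Finset.sum_const, c5, c4, c3 S, c3 Sᶜ,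
        ← c1, ← c2]
      rw [nsmul_eq_mul]
      exact this
    · right
      rw [KK_eq, c3 S]
      have e : (h : ℤ) - b - 1 = m - 1 := by rw [hm]
      rw [← e]
      exact H

/-- distinct roots give the formula -/
lemma CT_formula (B : Finset σ) (a b k : ℕ) (g : ℕ → ℕ)
    (hg : ∀ l l' r r' : ℕ, l < Fintype.card σ → l' < Fintype.card σ → r < b → r' < b →
      g l + r = g l' + r' → l = l' ∧ r = r')
    (hnum : ∀ l r, l < Fintype.card σ → r < b → NumC (#Bᶜ) (#B) k b (g l + r + 1)) :
    CT B a b k * ∏ l ∈ range (Fintype.card σ), ∏ r ∈ range b, ((g l : ℚ) + r + 1) =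
      CT B 0 0 k * ∏ l ∈ range (Fintype.card σ), ∏ r ∈ range b, ((a : ℚ) + g l + r + 1) := by
  set n := Fintype.card σ with hn
  set R : Polynomial ℚ := ∏ l ∈ range n, ∏ r ∈ range b,
    (Polynomial.X + Polynomial.C ((g l : ℚ) + r + 1 - b)) with hR
  have hReval : ∀ c : ℚ, R.eval c = ∏ l ∈ range n, ∏ r ∈ range b, (c + ((g l : ℚ) + r + 1 - b)) := by
    intro c
    simp [hR, Polynomial.eval_prod]
  have hRdeg : R.natDegree ≤ n * b := by
    refine (Polynomial.natDegree_prod_le _ _).trans ?_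
    refine (Finset.sum_le_card_nsmul _ _ b fun l _ => ?_).trans (by simp)
    refine (Polynomial.natDegree_prod_le _ _).trans ?_
    refine (Finset.sum_le_card_nsmul _ _ 1 fun r _ => ?_).trans (by simp)
    exact Polynomial.natDegree_X_add_C _ |>.le
  set Q : Polynomial ℚ := Polynomial.C (R.eval (b : ℚ)) * CTP B b k -
    Polynomial.C (CT B 0 0 k) * R with hQ
  have hCT : ∀ a : ℕ, (CTP B b k).eval ((a : ℚ) + b) = CT B a b k := by
    intro a
    rw [CTP_eval, CT_eq_phi]; push_cast; rfl
  have hQ0 : Q = 0 := by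
    let f : Option (Fin n × Fin b) → ℚ := fun o => match o with
      | none => (b : ℚ)
      | some p => (b : ℚ) - ((g p.1 + p.2 + 1 : ℕ) : ℚ)
    apply Polynomial.eq_zero_of_natDegree_lt_card_of_eval_eq_zero Q (f := f)
    · rintro (_ | ⟨l, r⟩) (_ | ⟨l', r'⟩) h
      · rfl
      · simp only [f] at h
        exfalso
        have h2 : ((g l' + r' + 1 : ℕ) : ℚ) = 0 := by linarith
        have h3 : (g l' + (r' : ℕ) + 1 : ℕ) = 0 := by exact_mod_cast h2
        omega
      · simp only [f] at h
        exfalso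
        have h2 : ((g l + r + 1 : ℕ) : ℚ) = 0 := by linarith
        have h3 : (g l + (r : ℕ) + 1 : ℕ) = 0 := by exact_mod_cast h2
        omega
      · simp only [f] at h
        have h2 : ((g l + r + 1 : ℕ) : ℚ) = ((g l' + r' + 1 : ℕ) : ℚ) := by linarith
        have h3 : (g l + (r : ℕ) + 1 : ℕ) = g l' + r' + 1 := by exact_mod_cast h2
        have := hg l l' r r' l.2 l'.2 r.2 r'.2 (by omega)
        congr 2
        · exact Fin.ext this.1
        · exact Fin.ext this.2
    · rintro (_ | ⟨l, r⟩)
      · simp only [f, hQ, Polynomial.eval_sub, Polynomial.eval_mul, Polynomial.eval_C]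
        have := hCT 0
        rw [Nat.cast_zero, zero_add, CT_zero_b] at this
        rw [this]; ring
      · simp only [f, hQ, Polynomial.eval_sub, Polynomial.eval_mul, Polynomial.eval_C]
        rw [CTP_root B b k _ (hnum l r l.2 r.2)]
        have : R.eval ((b : ℚ) - ((g l + r + 1 : ℕ) : ℚ)) = 0 := by
          rw [hReval]
          apply Finset.prod_eq_zero (Finset.mem_range.2 l.2)
          apply Finset.prod_eq_zero (Finset.mem_range.2 r.2)
          push_cast; ring
        rw [this]; ring
    · have : Q.natDegree ≤ n * b := by
        refine (Polynomial.natDegree_sub_le _ _).trans (max_le ?_ ?_)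
        · exact (Polynomial.natDegree_C_mul_le _ _).trans (CTP_deg B b k)
        · exact (Polynomial.natDegree_C_mul_le _ _).trans hRdeg
      simp
      omega
  have h := congrArg (Polynomial.eval ((a : ℚ) + b)) hQ0
  simp only [hQ, Polynomial.eval_sub, Polynomial.eval_mul, Polynomial.eval_C, Polynomial.eval_zero,
    hCT, hReval] at h
  have e1 : ∀ l r : ℕ, (b : ℚ) + ((g l : ℚ) + r + 1 - b) = (g l : ℚ) + r + 1 := by intros; ring
  have e2 : ∀ l r : ℕ, (a : ℚ) + b + ((g l : ℚ) + r + 1 - b) = (a : ℚ) + g l + r + 1 := by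
    intros; ring
  simp only [e1, e2] at h
  linarith
end general


section rational
variable {σ : Type} [Fintype σ] [DecidableEq σ]

/-- squared Vandermonde up to sign -/
noncomputable def DD (σ : Type) [Fintype σ] [DecidableEq σ] : MvPolynomial σ ℚ :=
  ∏ p ∈ (univ : Finset σ).offDiag, (X p.1 - X p.2)

noncomputable def K2 (i j : σ) : MvPolynomial σ ℚ :=
  ∏ p ∈ (univ : Finset σ).offDiag.erase (i, j), (X p.1 - X p.2)

lemma DD_eq (i j : σ) (h : i ≠ j) : DD σ = (X i - X j) * K2 i j := by
  unfold DD K2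
  rw [Finset.mul_prod_erase (univ : Finset σ).offDiag (fun p : σ × σ => (X p.1 - X p.2 : MvPolynomial σ ℚ)) (a := (i, j)) (by simp [h])]

lemma X_sub_ne (i j : σ) (h : i ≠ j) : (X i - X j : MvPolynomial σ ℚ) ≠ 0 := by
  rw [sub_ne_zero]
  intro h2
  exact h (MvPolynomial.X_injective h2)

lemma K2_swap (i j : σ) (h : i ≠ j) : K2 j i = - K2 i j := by
  apply mul_left_cancel₀ (X_sub_ne i j h)
  have h1 := DD_eq i j h
  have h2 := DD_eq j i h.symm
  rw [mul_neg, ← h1, h2]; ring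

lemma rename_DD (τ : Equiv.Perm σ) : rename τ (DD σ) = DD σ := by
  unfold DD
  rw [map_prod]
  refine Finset.prod_bij (fun p _ => (τ p.1, τ p.2)) ?_ ?_ ?_ ?_
  · intro p hp; simpa using hp
  · rintro ⟨a, b⟩ _ ⟨c, d⟩ _ h; simpa using h
  · rintro ⟨a, b⟩ h; exact ⟨(τ.symm a, τ.symm b), by simpa using h, by simp⟩
  · intro p _; simp

lemma rename_K2 (i j : σ) (h : i ≠ j) : rename (Equiv.swap i j) (K2 i j) = - K2 i j := by
  apply mul_left_cancel₀ (X_sub_ne j i h.symm)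
  have h1 := DD_eq i j h
  have h2 := congrArg (rename (Equiv.swap i j)) h1
  rw [rename_DD, map_mul, map_sub, rename_X, rename_X, Equiv.swap_apply_left,
    Equiv.swap_apply_right, h1] at h2
  rw [← h2]; ring

lemma pderiv_prod' {ι : Type} [DecidableEq ι] (i : σ) (s : Finset ι) (f : ι → MvPolynomial σ ℚ) :
    pderiv i (∏ p ∈ s, f p) = ∑ p ∈ s, (∏ q ∈ s.erase p, f q) * pderiv i (f p) := by
  induction s using Finset.induction_on with
  | empty => simp
  | insert a s ha ih =>
    rw [Finset.prod_insert ha, Finset.sum_insert ha, pderiv_mul, ih, Finset.erase_insert ha,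
      Finset.mul_sum]
    congr 1
    · ring
    · refine Finset.sum_congr rfl fun p hp => ?_
      have : p ≠ a := by rintro rfl; exact ha hp
      rw [Finset.erase_insert_of_ne this.symm, Finset.prod_insert (by simp [ha])]
      ring

lemma pderiv_DD (i : σ) : pderiv i (DD σ) = ∑ j ∈ univ.erase i, 2 * K2 i j := by
  unfold DD
  rw [pderiv_prod']
  have h1 : ∀ p ∈ (univ : Finset σ).offDiag,
      (∏ q ∈ (univ : Finset σ).offDiag.erase p, (X q.1 - X q.2 : MvPolynomial σ ℚ)) *
        pderiv i (X p.1 - X p.2) =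
      (if p.1 = i then K2 p.1 p.2 else 0) - (if p.2 = i then K2 p.1 p.2 else 0) := by
    rintro ⟨u, v⟩ _
    rw [map_sub, pderiv_X, pderiv_X]
    simp only [Pi.single_apply, K2]
    split_ifs <;> simp
  rw [Finset.sum_congr rfl h1, Finset.sum_sub_distrib, ← Finset.sum_filter, ← Finset.sum_filter]
  have h2 : ∑ p ∈ (univ : Finset σ).offDiag with p.1 = i, K2 p.1 p.2 =
      ∑ j ∈ univ.erase i, K2 i j := by
    symm
    refine Finset.sum_bij (fun j _ => (i, j)) ?_ ?_ ?_ ?_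
    · intro j hj; simp at hj ⊢; exact fun h => hj h.symm
    · intro a _ b _ h; simpa using h
    · rintro ⟨u, v⟩ h
      simp at h
      obtain ⟨h, rfl⟩ := h
      exact ⟨v, by simp; exact fun h' => h h'.symm, rfl⟩
    · intros; rfl
  have h3 : ∑ p ∈ (univ : Finset σ).offDiag with p.2 = i, K2 p.1 p.2 =
      ∑ j ∈ univ.erase i, K2 j i := by
    symm
    refine Finset.sum_bij (fun j _ => (j, i)) ?_ ?_ ?_ ?_
    · intro j hj; simpa using hj
    · intro a _ b _ h; simpa using h
    · rintro ⟨u, v⟩ h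
      simp at h
      obtain ⟨h, rfl⟩ := h
      exact ⟨u, by simpa using h, rfl⟩
    · intros; rfl
  rw [h2, h3, ← Finset.sum_sub_distrib]
  refine Finset.sum_congr rfl fun j hj => ?_
  rw [K2_swap i j (by simpa using (Finset.ne_of_mem_erase hj).symm)]
  ring

lemma coeff_X_mul_pderiv (i : σ) (N : σ →₀ ℕ) (F : MvPolynomial σ ℚ) :
    coeff N (X i * pderiv i F) = N i * coeff N F := by
  induction F using MvPolynomial.induction_on' with
  | monomial e c =>
    rw [X_mul_pderiv_monomial, coeff_smul, coeff_monomial]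
    split_ifs with h
    · subst h; simp
    · simp
  | add p q hp hq => rw [map_add, mul_add, coeff_add, hp, hq, coeff_add]; ring

/-- constant target exponent -/
noncomputable def tg (σ : Type) [Fintype σ] (M : ℕ) : σ →₀ ℕ :=
  Finsupp.equivFunOnFinite.symm (fun _ => M)

lemma coeff_tg_rename (M : ℕ) (τ : Equiv.Perm σ) (F : MvPolynomial σ ℚ) :
    coeff (tg σ M) (rename τ F) = coeff (tg σ M) F := by
  have h : (tg σ M).mapDomain τ = tg σ M := by
    ext l
    obtain ⟨l', rfl⟩ := τ.surjective l
    rw [Finsupp.mapDomain_apply τ.injective]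
    simp [tg]
  conv_lhs => rw [← h]
  rw [coeff_rename_mapDomain _ τ.injective]

noncomputable def tgt (σ : Type) [Fintype σ] (M k : ℕ) : σ →₀ ℕ :=
  tg σ (M + (Fintype.card σ - 1) * k)

noncomputable def EE (M k : ℕ) (e : σ →₀ ℕ) : ℚ :=
  coeff (tgt σ M k) (monomial e 1 * DD σ ^ k)

lemma EE_homog (M k : ℕ) (e : σ →₀ ℕ) (h : ∑ l, e l ≠ Fintype.card σ * M) : EE M k e = 0 := by
  have h1 : (monomial e (1 : ℚ) * DD σ ^ k).IsHomogeneous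
      (∑ l, e l + #(univ : Finset σ).offDiag * k) := by
    apply IsHomogeneous.mul
    · apply isHomogeneous_monomial
      rw [Finsupp.degree_eq_sum]
    · apply IsHomogeneous.pow
      unfold DD
      have := IsHomogeneous.prod (univ : Finset σ).offDiag
        (fun p : σ × σ => (X p.1 - X p.2 : MvPolynomial σ ℚ)) (fun _ => 1)
        (fun p _ => (isHomogeneous_X ℚ p.1).sub (isHomogeneous_X ℚ p.2))
      simpa using this
  by_contra h0
  have h2 := h1 h0
  rw [Finsupp.weight_apply, Finsupp.sum_fintype _ _ (by simp)] at h2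
  apply h
  simp [tgt, tg, Finset.offDiag_card] at h2
  have h3 : Fintype.card σ * Fintype.card σ - Fintype.card σ =
    Fintype.card σ * (Fintype.card σ - 1) := by rw [Nat.mul_sub, mul_one]
  rw [h3] at h2
  linarith

/-- the pair terms -/
noncomputable def cc (M k : ℕ) (i j : σ) (F : MvPolynomial σ ℚ) : ℚ :=
  coeff (tgt σ M (k + 1)) (F * ((X i + X j) * K2 i j) * DD σ ^ k)

lemma rel1 (M k : ℕ) (e : σ →₀ ℕ) (i : σ) :
    ((e i : ℚ) - M) * EE M (k + 1) e +
      (k + 1) * ∑ j ∈ univ.erase i, cc M k i j (monomial e 1) = 0 := by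
  have h1 := coeff_X_mul_pderiv i (tgt σ M (k + 1)) (monomial e 1 * DD σ ^ (k + 1))
  have h2 : X i * pderiv i (monomial e 1 * DD σ ^ (k + 1)) =
      C (e i : ℚ) * (monomial e 1 * DD σ ^ (k + 1)) +
        C ((k : ℚ) + 1) * ∑ j ∈ univ.erase i,
          (monomial e 1 * ((X i + X j) * K2 i j) * DD σ ^ k + monomial e 1 * DD σ ^ (k + 1)) := by
    rw [pderiv_mul, mul_add, ← mul_assoc, X_mul_pderiv_monomial, pderiv_pow, pderiv_DD]
    congr 1
    · rw [nsmul_eq_mul, ← mul_assoc]; simp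
    · rw [Finset.mul_sum, Finset.mul_sum, Finset.mul_sum, Finset.mul_sum]
      refine Finset.sum_congr rfl fun j hj => ?_
      have := DD_eq i j (Finset.ne_of_mem_erase hj).symm
      rw [pow_succ (DD σ) k]
      simp only [Nat.add_sub_cancel, map_add, C_1, map_natCast, Nat.cast_add, Nat.cast_one]
      linear_combination (-((k : MvPolynomial σ ℚ) + 1) * monomial e 1 * DD σ ^ k) * this
  rw [h2] at h1
  rw [coeff_add, coeff_C_mul, coeff_C_mul, coeff_sum] at h1
  simp only [coeff_add] at h1
  rw [Finset.sum_add_distrib, Finset.sum_const, Finset.card_erase_of_mem (Finset.mem_univ i),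
    Finset.card_univ] at h1
  have h3 : ((tgt σ M (k + 1)) i : ℚ) = M + ((Fintype.card σ - 1 : ℕ) : ℚ) * (k + 1) := by
    simp [tgt, tg]
  rw [h3, nsmul_eq_mul] at h1
  unfold EE cc
  linear_combination h1

lemma geom_id {R : Type} [CommRing R] (x y : R) (d : ℕ) :
    (x ^ (d + 1) - y ^ (d + 1)) * (x + y) =
      (x - y) * (x ^ (d + 1) + y ^ (d + 1) + 2 * ∑ t ∈ range d, x ^ (d - t) * y ^ (t + 1)) := by
  induction d with
  | zero => simp
  | succ d ih =>
    rw [Finset.sum_range_succ']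
    have : ∑ t ∈ range d, x ^ (d + 1 - (t + 1)) * y ^ (t + 1 + 1) =
        y * ∑ t ∈ range d, x ^ (d - t) * y ^ (t + 1) := by
      rw [Finset.mul_sum]
      refine Finset.sum_congr rfl fun t _ => ?_
      rw [Nat.add_sub_add_right]; ring
    rw [this]
    simp only [Nat.sub_zero, zero_add, pow_one]
    linear_combination y * ih

/-- monomials with two distinguished variables -/
noncomputable def mon (r : σ →₀ ℕ) (i j : σ) (p q : ℕ) : σ →₀ ℕ :=
  r + (Finsupp.single i p + Finsupp.single j q)

lemma mon_eq (r : σ →₀ ℕ) (i j : σ) (p q : ℕ) :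
    (monomial (mon r i j p q) 1 : MvPolynomial σ ℚ) = monomial r 1 * (X i ^ p * X j ^ q) := by
  rw [mon, X_pow_eq_monomial, X_pow_eq_monomial, monomial_mul, monomial_mul]; simp

lemma rename_r (r : σ →₀ ℕ) (i j : σ) (hi : r i = 0) (hj : r j = 0) :
    rename (Equiv.swap i j) (monomial r 1 : MvPolynomial σ ℚ) = monomial r 1 := by
  rw [rename_monomial]
  have key : Finsupp.mapDomain (Equiv.swap i j) r = r := by
    ext l
    obtain ⟨l', rfl⟩ := (Equiv.swap i j).surjective l
    rw [Finsupp.mapDomain_apply (Equiv.swap i j).injective]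
    by_cases h1 : l' = i
    · subst h1; simp [hi, hj]
    · by_cases h2 : l' = j
      · subst h2; simp [hi, hj]
      · rw [Equiv.swap_apply_of_ne_of_ne h1 h2]
  rw [key]

lemma EE_swap (M k : ℕ) (r : σ →₀ ℕ) (i j : σ) (hi : r i = 0) (hj : r j = 0) (p q : ℕ) :
    EE M k (mon r i j p q) = EE M k (mon r i j q p) := by
  unfold EE tgt
  rw [mon_eq, mon_eq, ← coeff_tg_rename _ (Equiv.swap i j)]
  rw [map_mul, map_pow, rename_DD, map_mul, rename_r r i j hi hj]
  simp [mul_comm]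

lemma cc_swap (M k : ℕ) (r : σ →₀ ℕ) (i j : σ) (hij : i ≠ j) (hi : r i = 0) (hj : r j = 0) (p q : ℕ) :
    cc M k i j (monomial (mon r i j p q) 1) = - cc M k i j (monomial (mon r i j q p) 1) := by
  unfold cc tgt
  rw [mon_eq, mon_eq, ← coeff_tg_rename _ (Equiv.swap i j)]
  rw [← coeff_neg]
  simp only [map_mul, map_pow, rename_DD, rename_K2 i j hij, rename_r r i j hi hj]
  congr 1
  simp only [rename_X, Equiv.swap_apply_left, Equiv.swap_apply_right, map_add]
  ring

lemma cc_eq (M k : ℕ) (r : σ →₀ ℕ) (i j : σ) (hij : i ≠ j) (hi : r i = 0) (hj : r j = 0) (q d : ℕ) :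
    cc M k i j (monomial (mon r i j (q + d + 1) q) 1) = EE M (k + 1) (mon r i j (q + d + 1) q) +
      ∑ t ∈ range d, EE M (k + 1) (mon r i j (q + d - t) (q + (t + 1))) := by
  have h1 := cc_swap M k r i j hij hi hj (q + d + 1) q
  have h2 : cc M k i j (monomial (mon r i j (q + d + 1) q) 1) -
      cc M k i j (monomial (mon r i j q (q + d + 1)) 1) =
      EE M (k + 1) (mon r i j (q + d + 1) q) + EE M (k + 1) (mon r i j q (q + d + 1)) +
        2 * ∑ t ∈ range d, EE M (k + 1) (mon r i j (q + d - t) (q + (t + 1))) := by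
    unfold cc EE
    rw [← coeff_sub, ← coeff_sum, ← coeff_add]
    have : ∀ (N : σ →₀ ℕ) (F : MvPolynomial σ ℚ), 2 * coeff N F = coeff N (2 * F) := by
      intro N F; rw [two_mul, two_mul, coeff_add]
    rw [this, ← coeff_add]
    congr 1
    have hD := DD_eq i j hij
    have hg := geom_id (X i : MvPolynomial σ ℚ) (X j) d
    have hs : ∑ t ∈ range d, (monomial (mon r i j (q + d - t) (q + (t + 1))) 1 : MvPolynomial σ ℚ)
        * DD σ ^ (k + 1) = monomial r 1 * X i ^ q * X j ^ q * DD σ ^ (k + 1) *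
          ∑ t ∈ range d, X i ^ (d - t) * X j ^ (t + 1) := by
      rw [Finset.mul_sum]
      refine Finset.sum_congr rfl fun t ht => ?_
      rw [Finset.mem_range] at ht
      rw [mon_eq, show q + d - t = q + (d - t) by omega, pow_add, pow_add (X j)]
      ring
    rw [hs, mon_eq, mon_eq, pow_succ (DD σ) k]
    set SS := ∑ t ∈ range d, (X i : MvPolynomial σ ℚ) ^ (d - t) * X j ^ (t + 1)
    rw [show q + d + 1 = q + (d + 1) by ring, pow_add (X i), pow_add (X j)]
    linear_combination (monomial r 1 * X i ^ q * X j ^ q * K2 i j * DD σ ^ k) * hg -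
      (monomial r 1 * X i ^ q * X j ^ q * DD σ ^ k *
        ((X i ^ (d + 1) + X j ^ (d + 1)) + 2 * SS)) * hD
  have h3 := EE_swap M (k + 1) r i j hi hj (q + d + 1) q
  linarith

/-- rational multiples of a sequence -/
def RatD (D f : ℕ → ℚ) : Prop := ∃ P Q : Polynomial ℚ, ∀ k : ℕ,
  Q.eval (k : ℚ) ≠ 0 ∧ Q.eval (k : ℚ) * f k = P.eval (k : ℚ) * D k

lemma RatD.zero (D : ℕ → ℚ) : RatD D (fun _ => 0) := ⟨0, 1, by simp⟩
lemma RatD.self (D : ℕ → ℚ) : RatD D D := ⟨1, 1, by simp⟩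
lemma RatD.add {D f g : ℕ → ℚ} (hf : RatD D f) (hg : RatD D g) : RatD D (fun k => f k + g k) := by
  obtain ⟨P, Q, h⟩ := hf
  obtain ⟨P', Q', h'⟩ := hg
  refine ⟨P * Q' + P' * Q, Q * Q', fun k => ⟨?_, ?_⟩⟩
  · simp [(h k).1, (h' k).1]
  · simp only [Polynomial.eval_add, Polynomial.eval_mul]
    linear_combination (Q'.eval (k : ℚ)) * (h k).2 + (Q.eval (k : ℚ)) * (h' k).2
lemma RatD.poly {D f : ℕ → ℚ} (hf : RatD D f) (R : Polynomial ℚ) :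
    RatD D (fun k => R.eval (k : ℚ) * f k) := by
  obtain ⟨P, Q, h⟩ := hf
  refine ⟨R * P, Q, fun k => ⟨(h k).1, ?_⟩⟩
  simp only [Polynomial.eval_mul]
  linear_combination (R.eval (k : ℚ)) * (h k).2
lemma RatD.sum {ι : Type} [DecidableEq ι] {D : ℕ → ℚ} (s : Finset ι) (f : ι → ℕ → ℚ)
    (h : ∀ i ∈ s, RatD D (f i)) : RatD D (fun k => ∑ i ∈ s, f i k) := by
  induction s using Finset.induction_on with
  | empty => simpa using RatD.zero D
  | insert a s ha ih =>
    simp only [Finset.sum_insert ha]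
    exact (h a (Finset.mem_insert_self _ _)).add (ih fun i hi => h i (Finset.mem_insert_of_mem hi))
lemma RatD.solve {D f g : ℕ → ℚ} (hg : RatD D g) (R : Polynomial ℚ)
    (hR : ∀ k : ℕ, R.eval (k : ℚ) ≠ 0) (h : ∀ k : ℕ, R.eval (k : ℚ) * f k = g k) : RatD D f := by
  obtain ⟨P, Q, h'⟩ := hg
  refine ⟨P, Q * R, fun k => ⟨?_, ?_⟩⟩
  · simp [(h' k).1, hR k]
  · rw [Polynomial.eval_mul, mul_assoc, h k, (h' k).2]

lemma exists_r (e : σ →₀ ℕ) (i j : σ) (hij : i ≠ j) :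
    ∃ r : σ →₀ ℕ, r i = 0 ∧ r j = 0 ∧ e = mon r i j (e i) (e j) := by
  refine ⟨(e.erase i).erase j, ?_, ?_, ?_⟩
  · simp [Finsupp.erase_apply]
  · simp
  · ext l
    simp only [mon, Finsupp.add_apply, Finsupp.single_apply, Finsupp.erase_apply]
    by_cases h1 : l = i
    · subst h1; simp [hij.symm]
    · by_cases h2 : l = j
      · subst h2; simp [hij]
      · simp [h1, h2, Ne.symm h1, Ne.symm h2]

lemma mon_sq (r : σ →₀ ℕ) (i j : σ) (hij : i ≠ j) (hi : r i = 0) (hj : r j = 0) (p q : ℕ) :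
    ∑ l, (mon r i j p q l) ^ 2 = ∑ l, (r l) ^ 2 + p ^ 2 + q ^ 2 := by
  have : ∀ l, (mon r i j p q l) ^ 2 = (r l) ^ 2 + (if i = l then p ^ 2 else 0) +
      (if j = l then q ^ 2 else 0) := by
    intro l
    simp only [mon, Finsupp.add_apply, Finsupp.single_apply]
    by_cases h1 : i = l
    · subst h1; simp [hij.symm, hi]
    · by_cases h2 : j = l
      · subst h2; simp [hij, hj]
      · simp [h1, h2]
  simp only [this, Finset.sum_add_distrib]
  simp

/-- the Dyson sequence -/
noncomputable def Dy (σ : Type) [Fintype σ] [DecidableEq σ] (k : ℕ) : ℚ :=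
  coeff (tgt σ 0 k) (DD σ ^ k)

lemma EE_const (M k : ℕ) (e : σ →₀ ℕ) (h : ∀ l, e l = M) : EE M k e = Dy σ k := by
  unfold EE Dy
  rw [coeff_monomial_mul', if_pos, one_mul]
  · congr 1
    ext l
    simp [tgt, tg, h]
  · intro l
    simp [tgt, tg, h]

lemma cc_same (M k : ℕ) (e : σ →₀ ℕ) (i j : σ) (hij : i ≠ j) (h : e i = e j) :
    cc M k i j (monomial e 1) = 0 := by
  obtain ⟨r, hi, hj, he⟩ := exists_r e i j hij
  rw [he]
  have := cc_swap M k r i j hij hi hj (e i) (e i)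
  rw [h] at this ⊢
  linarith

lemma EE_rat (M : ℕ) : ∀ (s : ℕ) (e : σ →₀ ℕ), ∑ l, (e l) ^ 2 = s →
    RatD (Dy σ) (fun k => EE M k e) := by
  intro s
  induction s using Nat.strong_induction_on with
  | _ s ih =>
  intro e hs
  by_cases hsum : ∑ l, e l = Fintype.card σ * M
  swap
  · have : (fun k => EE M k e) = fun _ => 0 := by ext k; exact EE_homog M k e hsum
    rw [this]; exact RatD.zero _
  by_cases hall : ∀ l, e l = M
  · have : (fun k => EE M k e) = Dy σ := by ext k; exact EE_const M k e hall
    rw [this]; exact RatD.self _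
  -- choose the maximal index
  have hne : (univ : Finset σ).Nonempty := by
    push Not at hall
    obtain ⟨l, _⟩ := hall
    exact ⟨l, Finset.mem_univ l⟩
  obtain ⟨i, -, hmax⟩ := Finset.exists_max_image univ (fun l => e l) hne
  have hi : M < e i := by
    by_contra hle
    push Not at hle
    apply hall
    have h3 : ∀ l ∈ (univ : Finset σ), e l = M := by
      rw [← Finset.sum_eq_sum_iff_of_le (fun l _ => (hmax l (Finset.mem_univ l)).trans hle), hsum]
      simp
    exact fun l => h3 l (Finset.mem_univ l)
  -- pair terms
  have hpair : ∀ j ∈ univ.erase i, ∃ g : ℕ → ℚ, RatD (Dy σ) g ∧ ∀ k,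
      cc M k i j (monomial e 1) = (if e j < e i then 1 else 0) * EE M (k + 1) e + g (k + 1) := by
    intro j hj
    have hij : i ≠ j := (Finset.ne_of_mem_erase hj).symm
    by_cases hlt : e j < e i
    · obtain ⟨r, hri, hrj, he⟩ := exists_r e i j hij
      obtain ⟨d, hd⟩ := Nat.exists_eq_add_of_lt hlt
      refine ⟨fun k => ∑ t ∈ range d, EE M k (mon r i j (e j + d - t) (e j + (t + 1))), ?_, ?_⟩
      · apply RatD.sum
        intro t ht
        rw [Finset.mem_range] at ht
        refine ih _ ?_ _ rfl
        rw [← hs]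
        conv_rhs => rw [he]
        rw [mon_sq r i j hij hri hrj, mon_sq r i j hij hri hrj, hd]
        obtain ⟨u, hu⟩ := Nat.exists_eq_add_of_lt ht
        have : e j + d - t = e j + u + 1 := by omega
        rw [this, hu]
        nlinarith
      · intro k
        rw [if_pos hlt, one_mul]
        have := cc_eq M k r i j hij hri hrj (e j) d
        rw [← hd, ← he] at this
        exact this
    · refine ⟨fun _ => 0, RatD.zero _, fun k => ?_⟩
      have := hmax j (Finset.mem_univ j)
      rw [if_neg hlt, cc_same M k e i j hij (by omega)]
      simp
  choose! g hg1 hg2 using hpair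
  have hG : RatD (Dy σ) (fun k => ∑ j ∈ univ.erase i, g j k) := RatD.sum _ _ hg1
  set cnt : ℚ := ∑ j ∈ univ.erase i, (if e j < e i then (1 : ℚ) else 0) with hcnt
  have hcnt0 : 0 ≤ cnt := Finset.sum_nonneg fun j _ => by split_ifs <;> norm_num
  have hlam : (0 : ℚ) < (e i : ℚ) - M := by
    rw [sub_pos]; exact_mod_cast hi
  refine (hG.poly (-Polynomial.X)).solve
    (Polynomial.C ((e i : ℚ) - M) + Polynomial.X * Polynomial.C cnt) ?_ ?_
  · intro k
    simp only [Polynomial.eval_add, Polynomial.eval_mul, Polynomial.eval_C, Polynomial.eval_X]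
    have : (0 : ℚ) ≤ k * cnt := by positivity
    linarith
  · intro k
    simp only [Polynomial.eval_add, Polynomial.eval_mul, Polynomial.eval_C, Polynomial.eval_X,
      Polynomial.eval_neg]
    cases k with
    | zero =>
      have h1 := coeff_X_mul_pderiv i (tgt σ M 0) (monomial e 1)
      rw [X_mul_pderiv_monomial, coeff_smul, nsmul_eq_mul] at h1
      have h2 : ((tgt σ M 0) i : ℚ) = M := by simp [tgt, tg]
      rw [h2] at h1
      have h3 : EE M 0 e = coeff (tgt σ M 0) (monomial e (1 : ℚ)) := by simp [EE]
      rw [h3]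
      push_cast
      linear_combination h1
    | succ k =>
      have h := rel1 M k e i
      rw [Finset.sum_congr rfl (fun j hj => hg2 j hj k), Finset.sum_add_distrib,
        ← Finset.sum_mul, ← hcnt] at h
      push_cast
      linear_combination h

lemma coeff_rat (M : ℕ) (p : MvPolynomial σ ℚ) :
    RatD (Dy σ) (fun k => coeff (tgt σ M k) (p * DD σ ^ k)) := by
  have : (fun k => coeff (tgt σ M k) (p * DD σ ^ k)) =
      fun k : ℕ => ∑ e ∈ p.support, (Polynomial.C (coeff e p)).eval (k : ℚ) * EE M k e := by
    ext k
    conv_lhs => rw [p.as_sum, Finset.sum_mul, coeff_sum]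
    refine Finset.sum_congr rfl fun e _ => ?_
    rw [Polynomial.eval_C, EE, ← coeff_C_mul, ← mul_assoc, C_mul_monomial, mul_one]
  rw [this]
  classical
  exact RatD.sum _ _ fun e _ => (EE_rat M _ e rfl).poly _

lemma GG_eq (B : Finset σ) (k : ℕ) : GG B k = GG B 0 * DD σ ^ k := by
  unfold GG DD kap
  rw [← Finset.prod_pow, ← Finset.prod_mul_distrib]
  refine Finset.prod_congr rfl fun p _ => ?_
  rw [← pow_add]; congr 1; ring

lemma Dy_eq (k : ℕ) : Dy σ k = CT (∅ : Finset σ) 0 0 k := by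
  have : GG (∅ : Finset σ) 0 = 1 := by simp [GG, kap]
  rw [CT, GG_eq, this]
  simp [Dy, tgt, tg]
  congr 2
  funext l
  simp [NN]

lemma CT_rat (B : Finset σ) (a b : ℕ) : RatD (Dy σ) (fun k => CT B a b k) := by
  set u : σ →₀ ℕ := Finsupp.equivFunOnFinite.symm (fun l => if l ∈ B then 0 else #B - 1) with hu
  have := coeff_rat (b + (#B - 1))
    (monomial u 1 * (GG B 0 * ∏ l, ((1 - X l : MvPolynomial σ ℚ) ^ a * (X l - 1) ^ b)))
  convert this using 2 with k
  rw [CT, GG_eq, mul_assoc (monomial u 1), coeff_monomial_mul', if_pos]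
  · rw [one_mul]
    congr 1
    · ext l
      simp only [tgt, tg, NN, hu, Finsupp.coe_equivFunOnFinite_symm, Finsupp.coe_tsub, Pi.sub_apply]
      split_ifs <;> omega
    · ring
  · intro l
    simp only [tgt, tg, hu, Finsupp.coe_equivFunOnFinite_symm]
    split_ifs <;> omega
end rational


lemma prod_offDiag_erase {σ M : Type} [DecidableEq σ] [CommMonoid M] (S : Finset σ) (f : σ → σ → M) :
    ∏ p ∈ S.offDiag, f p.1 p.2 = ∏ j ∈ S, ∏ i ∈ S.erase j, f j i := by
  have h : S.offDiag = (S ×ˢ S).filter (fun p => p.1 ≠ p.2) := by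
    ext p; simp [Finset.mem_offDiag, and_assoc]
  rw [h, Finset.prod_filter, Finset.prod_product]
  refine Finset.prod_congr rfl fun j _ => ?_
  rw [← Finset.prod_filter]
  refine Finset.prod_congr ?_ fun _ _ => rfl
  ext i
  simp only [Finset.mem_filter, Finset.mem_erase]
  constructor
  · rintro ⟨h1, h2⟩; exact ⟨fun h => h2 h.symm, h1⟩
  · rintro ⟨h1, h2⟩; exact ⟨h2, fun h => h1 h.symm⟩

lemma prod_offDiag_ite {σ M : Type} [Fintype σ] [DecidableEq σ] [CommMonoid M] (f : σ → σ → M) :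
    ∏ p ∈ (univ : Finset σ).offDiag, f p.1 p.2 = ∏ j, ∏ i, if j ≠ i then f j i else 1 := by
  have h : (univ : Finset σ).offDiag = (univ ×ˢ univ).filter (fun p => p.1 ≠ p.2) := by
    ext p; simp [Finset.mem_offDiag]
  rw [h, Finset.prod_filter, Finset.prod_product]

lemma dehom (n D c : ℕ) (f : MvPolynomial (Fin (n + 1)) ℚ) (hf : f.IsHomogeneous D)
    (m : Fin n → ℕ) (hD : c + ∑ l, m l = D) :
    coeff (Finsupp.equivFunOnFinite.symm (Fin.cons c m : Fin (n + 1) → ℕ)) f =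
      coeff (Finsupp.equivFunOnFinite.symm m)
        (aeval (Fin.cons 1 (fun l => X l) : Fin (n + 1) → MvPolynomial (Fin n) ℚ) f) := by
  conv_rhs => rw [f.as_sum]
  rw [map_sum, coeff_sum]
  have key : ∀ e : Fin (n + 1) →₀ ℕ, ∀ r : ℚ,
      aeval (Fin.cons 1 (fun l => X l) : Fin (n + 1) → MvPolynomial (Fin n) ℚ) (monomial e r) =
        monomial (Finsupp.equivFunOnFinite.symm (fun l : Fin n => e l.succ)) r := by
    intro e r
    rw [aeval_monomial, Finsupp.prod_fintype _ _ (by simp), Fin.prod_univ_succ]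
    rw [monomial_eq, Finsupp.prod_fintype _ _ (by simp)]
    simp [algebraMap_eq]
  simp_rw [key, coeff_monomial]
  set E : Fin (n + 1) →₀ ℕ := Finsupp.equivFunOnFinite.symm (Fin.cons c m : Fin (n + 1) → ℕ) with hE
  have hEt : Finsupp.equivFunOnFinite.symm (fun l : Fin n => E l.succ) =
      Finsupp.equivFunOnFinite.symm m := by
    ext l; simp [hE]
  rw [Finset.sum_eq_single E]
  · rw [if_pos hEt]
  · intro e he hne
    rw [if_neg]
    intro h
    apply hne
    have h2 : ∀ l : Fin n, e l.succ = m l := fun l => by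
      have := DFunLike.congr_fun h l
      simpa using this
    have h3 := hf (mem_support_iff.mp he)
    rw [Finsupp.weight_apply, Finsupp.sum_fintype _ _ (by simp), Fin.sum_univ_succ] at h3
    simp only [Pi.one_apply, smul_eq_mul, mul_one, h2] at h3
    ext l
    refine Fin.cases ?_ (fun l => ?_) l
    · simp [hE]; omega
    · simp [hE, h2]
  · intro h
    rw [if_pos hEt]
    exact notMem_support_iff.mp h

noncomputable def HP {n : ℕ} (B : Finset (Fin n)) (a b k : ℕ) : MvPolynomial (Fin (n + 1)) ℚ :=
  rename Fin.succ (GG B k) * ∏ l : Fin n, ((X 0 - X l.succ) ^ a * (X l.succ - X 0) ^ b)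

noncomputable def HC {n : ℕ} (B : Finset (Fin n)) (a b k : ℕ) : ℚ :=
  coeff (Finsupp.equivFunOnFinite.symm (Fin.cons (n * a) (NN B k b) : Fin (n + 1) → ℕ)) (HP B a b k)

lemma HP_hom {n : ℕ} (B : Finset (Fin n)) (a b k : ℕ) :
    (HP B a b k).IsHomogeneous (KK B k univ + ∑ _l : Fin n, (1 * a + 1 * b)) := by
  refine IsHomogeneous.mul ((GG_deg B k).rename_isHomogeneous) (IsHomogeneous.prod _ _ _ fun l _ => ?_)
  exact IsHomogeneous.mul (((isHomogeneous_X _ _).sub (isHomogeneous_X _ _)).pow a)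
    (((isHomogeneous_X _ _).sub (isHomogeneous_X _ _)).pow b)

lemma HC_eq {n : ℕ} (B : Finset (Fin n)) (a b k : ℕ) : HC B a b k = CT B a b k := by
  rw [HC, dehom n _ _ _ (HP_hom B a b k), CT, HP]
  · congr 1
    rw [map_mul, map_prod, aeval_rename]
    congr 1
    · have : (Fin.cons 1 (fun l => X l) : Fin (n + 1) → MvPolynomial (Fin n) ℚ) ∘ Fin.succ = X := by
        funext l; simp
      rw [this, aeval_X_left]; rfl
    · simp
  · rw [NN_sum_univ]
    simp
    ring

lemma GG_succ {n : ℕ} (B : Finset (Fin n)) (k : ℕ) :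
    GG (B.map (Fin.succEmb n)) k = HP B k k k := by
  unfold HP GG
  rw [map_prod]
  rw [prod_offDiag_ite (fun p q : Fin (n+1) => (X p - X q : MvPolynomial (Fin (n+1)) ℚ) ^ kap (B.map (Fin.succEmb n)) k (p, q)),
    prod_offDiag_ite (fun p q : Fin n => rename Fin.succ ((X p - X q : MvPolynomial (Fin n) ℚ) ^ kap B k (p, q)))]
  rw [Fin.prod_univ_succ]
  simp_rw [Fin.prod_univ_succ]
  rw [Finset.prod_mul_distrib, Finset.prod_mul_distrib]
  have h0 : ∀ q, kap (B.map (Fin.succEmb n)) k (0, q) = k := by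
    intro q; simp [kap, Fin.succ_ne_zero]
  have h1 : ∀ q, kap (B.map (Fin.succEmb n)) k (q, 0) = k := by
    intro q; simp [kap, Fin.succ_ne_zero]
  have h2 : ∀ p q : Fin n, kap (B.map (Fin.succEmb n)) k (p.succ, q.succ) = kap B k (p, q) := by
    intro p q; simp [kap]
  simp only [h0, h1, h2]
  simp [Fin.succ_ne_zero, (Fin.succ_ne_zero _).symm]
  ring

lemma chain_CT {n : ℕ} (B : Finset (Fin n)) (k : ℕ) :
    CT B k k k = CT (B.map (Fin.succEmb n)) 0 0 k := by
  rw [← HC_eq, HC, CT, GG_succ]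
  simp only [pow_zero, mul_one, Finset.prod_const_one]
  congr 2
  funext l
  refine Fin.cases ?_ (fun l => ?_) l
  · simp [NN, Fin.succ_ne_zero]
  · obtain ⟨m, rfl⟩ : ∃ m, n = m + 1 := ⟨n - 1, by have := l.2; omega⟩
    simp [NN]
    ring

def Bf (n n0 : ℕ) : Finset (Fin n) := univ.filter (fun l : Fin n => n0 ≤ (l : ℕ))

lemma Bf_succ (n n0 : ℕ) : (Bf n n0).map (Fin.succEmb n) = Bf (n + 1) (n0 + 1) := by
  ext l
  refine Fin.cases ?_ (fun l => ?_) l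
  · simp [Bf, Fin.succ_ne_zero]
  · simp [Bf]

lemma Bf_zero (n : ℕ) : Bf n 0 = univ := by simp [Bf]
lemma Bf_self (n : ℕ) : Bf n n = ∅ := by
  ext l; simp [Bf]
lemma Bf_card (n n0 : ℕ) (h : n0 ≤ n) : #(Bf n n0) = n - n0 := by
  have h1 : #(univ.filter (fun l : Fin n => (l : ℕ) < n0)) = min n n0 := Fin.card_filter_val_lt
  have : Bf n n0 = (univ.filter (fun l : Fin n => (l : ℕ) < n0))ᶜ := by
    ext l; simp [Bf]
  rw [this, Finset.card_compl, h1]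
  simp [h]
lemma Bf_card_compl (n n0 : ℕ) (h : n0 ≤ n) : #(Bf n n0)ᶜ = n0 := by
  rw [Finset.card_compl, Bf_card n n0 h]; simp; omega

noncomputable def F (n n0 a b k : ℕ) : ℚ := CT (Bf n n0) a b k

lemma F_chain (n n0 k : ℕ) : F n n0 k k k = F (n + 1) (n0 + 1) 0 0 k := by
  rw [F, chain_CT, Bf_succ]; rfl

lemma F_base (n a b k : ℕ) : F n 0 a b k = F n n a b (k + 1) := by
  unfold F CT
  rw [Bf_zero, Bf_self]
  have h1 : GG (univ : Finset (Fin n)) k = GG ∅ (k + 1) := by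
    unfold GG kap; simp
  rw [h1]
  congr 2
  funext l
  simp [NN]; ring

lemma forresterCT_eq (n₀ n₁ a b k : ℕ) : forresterCT n₀ n₁ a b k = F (n₀ + n₁) n₀ a b k := by
  rw [F, ← HC_eq, HC, forresterCT, HP]
  have hN : NN (Bf (n₀ + n₁) n₀) k b = (fun l : Fin (n₀ + n₁) =>
          b + (n₀ + n₁ - 1) * k + (if n₀ ≤ (l : ℕ) then n₁ - 1 else 0)) := by
    funext l
    rw [NN, Bf_card _ _ (by omega)]
    simp [Bf]
  rw [hN]
  congr 1
  rw [GG, map_prod, ← prod_offDiag_erase, ← Bf]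
  have h2 := prod_offDiag_erase (univ : Finset (Fin (n₀ + n₁)))
    (fun j i => (X j.succ - X i.succ : MvPolynomial (Fin (n₀ + n₁ + 1)) ℚ) ^ k)
  rw [← h2, mul_right_comm]
  congr 1
  have h3 : ∏ p ∈ (Bf (n₀ + n₁) n₀).offDiag, (X p.1.succ - X p.2.succ : MvPolynomial (Fin (n₀ + n₁ + 1)) ℚ)
     = ∏ p ∈ (univ : Finset (Fin (n₀ + n₁))).offDiag, (X p.1.succ - X p.2.succ : MvPolynomial (Fin (n₀ + n₁ + 1)) ℚ) ^
      (if p.1 ∈ Bf (n₀ + n₁) n₀ ∧ p.2 ∈ Bf (n₀ + n₁) n₀ then 1 else 0) := by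
    have h4 : (Bf (n₀ + n₁) n₀).offDiag = (univ : Finset (Fin (n₀ + n₁))).offDiag.filter
       (fun p => p.1 ∈ Bf (n₀ + n₁) n₀ ∧ p.2 ∈ Bf (n₀ + n₁) n₀) := by
      ext p; simp [Finset.mem_offDiag]; tauto
    rw [h4, Finset.prod_filter]
    refine Finset.prod_congr rfl fun p _ => ?_
    split_ifs <;> simp
  rw [h3, ← Finset.prod_mul_distrib]
  refine Finset.prod_congr rfl fun p _ => ?_
  rw [map_pow, map_sub, rename_X, rename_X, kap, pow_add, mul_comm]

set_option maxHeartbeats 4000000 in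
lemma numC_ok (n0 n1 k b l r : ℕ) (hn : n0 + n1 ≤ 5) (hk : 1 ≤ k) (hb : b ≤ k) (hl : l < n0 + n1) (hr : r < b) :
    NumC n0 n1 k b (k * l + (l - n0) + r + 1) := by
  intro s0 s1 t0 t1 h0 h1
  subst h0 h1
  push_cast
  have a1 : s0 ≤ 5 := by omega
  have a2 : s1 ≤ 5 := by omega
  have a3 : t0 ≤ 5 := by omega
  have a4 : t1 ≤ 5 := by omega
  have a5 : l ≤ 4 := by omega
  interval_cases s0 <;> interval_cases s1 <;> (try omega) <;> interval_cases t0 <;> (try omega) <;> interval_cases t1 <;> (try omega) <;> interval_cases l <;> omega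


lemma prod_asc (x b : ℕ) : ∏ r ∈ range b, ((x : ℚ) + r + 1) = ((x + b).factorial : ℚ) / x.factorial := by
  have hx : (x.factorial : ℚ) ≠ 0 := by positivity
  induction b with
  | zero => simp [hx]
  | succ b ih =>
    rw [Finset.prod_range_succ, ih, ← add_assoc, Nat.factorial_succ]
    push_cast
    field_simp

lemma RHS_split (n₀ n₁ a b k : ℕ) : forresterRHS n₀ n₁ a b k = forresterRHS n₀ n₁ 0 0 k *
    ∏ l ∈ range (n₀ + n₁), ((∏ r ∈ range b, ((a : ℚ) + (k * l + (l - n₀) : ℕ) + r + 1)) /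
      (∏ r ∈ range b, (((k * l + (l - n₀) : ℕ) : ℚ) + r + 1))) := by
  have h : ∀ g : ℕ, (∏ r ∈ range b, ((a : ℚ) + (g : ℕ) + r + 1)) /
      (∏ r ∈ range b, ((g : ℚ) + r + 1)) =
      ((a + b + g).factorial * g.factorial : ℚ) / ((a + g).factorial * (b + g).factorial) := by
    intro g
    have := prod_asc (a + g) b
    push_cast at this
    rw [this, prod_asc g b, add_right_comm a g b, add_comm g b]
    field_simp
  simp only [h]
  rw [Finset.prod_range_add]
  unfold forresterRHS
  rw [mul_mul_mul_comm, ← Finset.prod_mul_distrib, ← Finset.prod_mul_distrib]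
  congr 1
  · refine Finset.prod_congr rfl fun l hl => ?_
    have : l - n₀ = 0 := by have := Finset.mem_range.mp hl; omega
    rw [this]
    simp only [zero_add, add_zero]
    field_simp
  · refine Finset.prod_congr rfl fun j hj => ?_
    have : k * (n₀ + j) + (n₀ + j - n₀) = (k + 1) * j + k * n₀ := by
      rw [Nat.add_sub_cancel_left]; ring
    rw [this]
    simp only [add_zero]
    have e1 : (k + 1) * j + a + b + k * n₀ = a + b + ((k + 1) * j + k * n₀) := by ring
    have e2 : (k + 1) * j + a + k * n₀ = a + ((k + 1) * j + k * n₀) := by ring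
    have e3 : (k + 1) * j + b + k * n₀ = b + ((k + 1) * j + k * n₀) := by ring
    rw [e1, e2, e3]
    field_simp

lemma RHS_chain (n₀ n₁ k : ℕ) : forresterRHS n₀ n₁ k k k = forresterRHS (n₀ + 1) n₁ 0 0 k := by
  unfold forresterRHS
  rw [Finset.prod_range_succ']
  have h0 : ((0 + 0 + k * 0).factorial * (k * (0 + 1)).factorial : ℚ) /
        ((0 + k * 0).factorial * (0 + k * 0).factorial * k.factorial) = 1 := by
    simp [Nat.factorial_ne_zero]
  rw [h0, mul_one]
  congr 1
  · refine Finset.prod_congr rfl fun l hl => ?_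
    have e1 : k + k + k * l = k * (l + 1 + 1) := by ring
    have e2 : k + k * l = k * (l + 1) := by ring
    simp only [zero_add, e1, e2]
    field_simp
  · refine Finset.prod_congr rfl fun j hj => ?_
    have e1 : (k + 1) * j + k + k + k * n₀ = k * j + k + j + k * (n₀ + 1) := by ring
    have e2 : (k + 1) * j + k + k * n₀ = (k + 1) * j + k * (n₀ + 1) := by ring
    have e3 : k * j + k + j + k * n₀ = (k + 1) * j + k * (n₀ + 1) := by ring
    simp only [add_zero, e1, e2, e3]
    field_simp

lemma RHS_base (n k : ℕ) : forresterRHS 0 n 0 0 k = forresterRHS n 0 0 0 (k + 1) := by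
  unfold forresterRHS
  rw [Finset.prod_range_zero, one_mul, Finset.prod_range_zero, mul_one]
  refine Finset.prod_congr rfl fun j hj => ?_
  have e1 : (k + 1) * (j + 1) = (k * j + k + j) + 1 := by ring
  simp only [add_zero, zero_add, mul_zero]
  rw [e1, Nat.factorial_succ, Nat.factorial_succ]
  push_cast
  field_simp
  ring

lemma F_formula (n₀ n₁ a b k : ℕ) (hn : n₀ + n₁ ≤ 5) (hk : 1 ≤ k) (hb : b ≤ k)
    (h : F (n₀ + n₁) n₀ 0 0 k = forresterRHS n₀ n₁ 0 0 k) :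
    F (n₀ + n₁) n₀ a b k = forresterRHS n₀ n₁ a b k := by
  have key := CT_formula (Bf (n₀ + n₁) n₀) a b k (fun l => k * l + (l - n₀)) ?_ ?_
  · rw [RHS_split, ← h]
    simp only [Fintype.card_fin] at key
    rw [Finset.prod_div_distrib, ← mul_div_assoc, eq_div_iff]
    · exact key
    · refine Finset.prod_ne_zero_iff.mpr fun l _ => Finset.prod_ne_zero_iff.mpr fun r _ => ?_
      positivity
  · intro l l' r r' hl hl' hr hr' he
    have : l = l' := by
      rcases lt_trichotomy l l' with hlt | heq | hlt
      · exfalso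
        have h1 : k * (l + 1) ≤ k * l' := Nat.mul_le_mul_left k hlt
        rw [mul_add] at h1
        omega
      · exact heq
      · exfalso
        have h1 : k * (l' + 1) ≤ k * l := Nat.mul_le_mul_left k hlt
        rw [mul_add] at h1
        omega
    subst this
    exact ⟨rfl, by omega⟩
  · intro l r hl hr
    rw [Bf_card _ _ (by omega), Bf_card_compl _ _ (by omega), Nat.add_sub_cancel_left]
    simp only [Fintype.card_fin] at hl
    exact numC_ok n₀ n₁ k b l r hn hk hb hl hr

lemma F_zero (k : ℕ) : F 0 0 0 0 k = 1 := by
  unfold F CT GG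
  have : (univ : Finset (Fin 0)).offDiag = ∅ := by ext p; exact p.1.elim0
  rw [this]
  simp only [Finset.prod_empty, pow_zero, mul_one, Finset.prod_const_one]
  rw [coeff_one, if_pos]
  ext l; exact l.elim0

lemma dyson (n k : ℕ) (hn : n ≤ 5) : F n n 0 0 k = forresterRHS n 0 0 0 k := by
  rcases Nat.eq_zero_or_pos k with rfl | hk
  · have : GG (∅ : Finset (Fin n)) 0 = 1 := by simp [GG, kap]
    unfold F CT
    rw [Bf_self, this]
    simp only [Finset.prod_empty, pow_zero, mul_one, Finset.prod_const_one]
    rw [coeff_one, if_pos]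
    · simp [forresterRHS]
    · ext l; simp [NN]
  · induction n with
    | zero => rw [F_zero]; simp [forresterRHS]
    | succ n ih =>
      rw [← F_chain, ← RHS_chain]
      exact F_formula n 0 k k k (by omega) hk le_rfl (ih (by omega))

lemma F_zz (n₀ n₁ k : ℕ) (hn : n₀ + n₁ ≤ 5) (hk : 1 ≤ k) :
    F (n₀ + n₁) n₀ 0 0 k = forresterRHS n₀ n₁ 0 0 k := by
  induction n₀ with
  | zero => rw [zero_add, F_base, dyson _ _ (by omega), RHS_base]
  | succ n₀ ih =>
    rw [show n₀ + 1 + n₁ = n₀ + n₁ + 1 by ring, ← F_chain, ← RHS_chain]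
    exact F_formula n₀ n₁ k k k (by omega) hk le_rfl (ih (by omega))

lemma F_large (n₀ n₁ a b k : ℕ) (hn : n₀ + n₁ ≤ 5) (hk : 1 ≤ k) (hb : b ≤ k) :
    F (n₀ + n₁) n₀ a b k = forresterRHS n₀ n₁ a b k :=
  F_formula n₀ n₁ a b k hn hk hb (F_zz n₀ n₁ k hn hk)

/-- the polynomial `(c k + u)! / (c k)!` -/
noncomputable def Ap (c u : ℕ) : Polynomial ℚ :=
  ∏ i ∈ range u, (Polynomial.C (c : ℚ) * Polynomial.X + Polynomial.C ((i : ℚ) + 1))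

lemma Ap_eval (c u k : ℕ) : (Ap c u).eval (k : ℚ) = ((k * c + u).factorial : ℚ) / (k * c).factorial := by
  rw [← prod_asc, Ap, Polynomial.eval_prod]
  refine Finset.prod_congr rfl fun i _ => ?_
  simp only [Polynomial.eval_add, Polynomial.eval_mul, Polynomial.eval_C, Polynomial.eval_X]
  push_cast
  ring

lemma Ap_ne (c u k : ℕ) : (Ap c u).eval (k : ℚ) ≠ 0 := by
  rw [Ap_eval]; positivity

lemma RatD.mulD {D D' f f' : ℕ → ℚ} (h : RatD D f) (h' : RatD D' f') :
    RatD (fun k => D k * D' k) (fun k => f k * f' k) := by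
  obtain ⟨P, Q, hPQ⟩ := h
  obtain ⟨P', Q', hPQ'⟩ := h'
  refine ⟨P * P', Q * Q', fun k => ⟨?_, ?_⟩⟩
  · rw [Polynomial.eval_mul]; exact mul_ne_zero (hPQ k).1 (hPQ' k).1
  · rw [Polynomial.eval_mul, Polynomial.eval_mul, mul_mul_mul_comm, (hPQ k).2, (hPQ' k).2,
      mul_mul_mul_comm]

lemma RatD.prodD (m : ℕ) (D f : ℕ → ℕ → ℚ) (h : ∀ l, l < m → RatD (D l) (f l)) :
    RatD (fun k => ∏ l ∈ range m, D l k) (fun k => ∏ l ∈ range m, f l k) := by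
  induction m with
  | zero => exact ⟨1, 1, fun k => by simp⟩
  | succ m ih =>
    simp only [Finset.prod_range_succ]
    exact (ih fun l hl => h l (by omega)).mulD (h m (by omega))

lemma RHS_rat (n₀ n₁ a b : ℕ) :
    RatD (fun k => forresterRHS (n₀ + n₁) 0 0 0 k) (fun k => forresterRHS n₀ n₁ a b k) := by
  unfold forresterRHS
  simp only [Finset.prod_range_zero, mul_one, Finset.prod_range_add]
  refine RatD.mulD (RatD.prodD _ _ _ fun l hl => ?_) (RatD.prodD _ _ _ fun j hj => ?_)
  · refine ⟨Ap l (a + b), Ap l a * Ap l b, fun k => ⟨?_, ?_⟩⟩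
    · rw [Polynomial.eval_mul]; exact mul_ne_zero (Ap_ne _ _ _) (Ap_ne _ _ _)
    · rw [Polynomial.eval_mul, Ap_eval, Ap_eval, Ap_eval]
      beta_reduce
      have e1 : a + b + k * l = k * l + (a + b) := by ring
      rw [e1, add_comm a (k * l), add_comm b (k * l)]
      simp only [zero_add]
      field_simp
  · refine ⟨Polynomial.C ((j : ℚ) + 1) * Ap (n₀ + j) (j + a + b) * Ap (n₀ + j + 1) j,
      Ap (n₀ + j) (j + a) * Ap (n₀ + j) (j + b), fun k => ⟨?_, ?_⟩⟩
    · rw [Polynomial.eval_mul]; exact mul_ne_zero (Ap_ne _ _ _) (Ap_ne _ _ _)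
    · simp only [Polynomial.eval_mul, Ap_eval, Polynomial.eval_C]
      have e1 : (k + 1) * j + a + b + k * n₀ = k * (n₀ + j) + (j + a + b) := by ring
      have e2 : (k + 1) * j + a + k * n₀ = k * (n₀ + j) + (j + a) := by ring
      have e3 : (k + 1) * j + b + k * n₀ = k * (n₀ + j) + (j + b) := by ring
      have e4 : k * j + k + j + k * n₀ = k * (n₀ + j + 1) + j := by ring
      rw [e1, e2, e3, e4]
      simp only [zero_add]
      field_simp

lemma RatD.uniq {D f g : ℕ → ℚ} (hf : RatD D f) (hg : RatD D g) (hD : ∀ k, D k ≠ 0) (K : ℕ)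
    (h : ∀ k, K ≤ k → f k = g k) (k : ℕ) : f k = g k := by
  obtain ⟨P, Q, hPQ⟩ := hf
  obtain ⟨P', Q', hPQ'⟩ := hg
  have key : Q' * P = Q * P' := by
    apply Polynomial.eq_of_infinite_eval_eq
    have hinf : (Set.range (fun i : ℕ => ((K + i : ℕ) : ℚ))).Infinite := by
      apply Set.infinite_range_of_injective
      intro i j hij
      beta_reduce at hij
      have : K + i = K + j := by exact_mod_cast hij
      omega
    refine hinf.mono ?_
    rintro _ ⟨i, rfl⟩
    have h1 := (hPQ (K + i)).2
    have h2 := (hPQ' (K + i)).2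
    rw [← h _ (Nat.le_add_right K i)] at h2
    simp only [Set.mem_setOf_eq, Polynomial.eval_mul]
    apply mul_right_cancel₀ (hD (K + i))
    linear_combination (Polynomial.eval ((K + i : ℕ) : ℚ) Q) * h2 - (Polynomial.eval ((K + i : ℕ) : ℚ) Q') * h1
  have h3 := congrArg (Polynomial.eval (k : ℚ)) key
  rw [Polynomial.eval_mul, Polynomial.eval_mul] at h3
  obtain ⟨q1, h1⟩ := hPQ k
  obtain ⟨q2, h2⟩ := hPQ' k
  apply mul_left_cancel₀ (mul_ne_zero q1 q2)
  linear_combination (Polynomial.eval (k : ℚ) Q') * h1 - (Polynomial.eval (k : ℚ) Q) * h2 + D k * h3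

lemma RHS_ne (n k : ℕ) : forresterRHS n 0 0 0 k ≠ 0 := by
  unfold forresterRHS
  rw [Finset.prod_range_zero, mul_one]
  refine Finset.prod_ne_zero_iff.mpr fun l _ => ?_
  positivity

/-- **Forrester's conjecture for `n ≤ 5`** (Proposition 5.4). -/
theorem forrester_n_le_five (n₀ n₁ a b k : ℕ) (hn : n₀ + n₁ ≤ 5) :
    forresterCT n₀ n₁ a b k = forresterRHS n₀ n₁ a b k := by
  rw [forresterCT_eq]
  have hDy : (Dy (Fin (n₀ + n₁))) = fun k => forresterRHS (n₀ + n₁) 0 0 0 k := by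
    funext k
    rw [Dy_eq, ← dyson _ _ hn, F, Bf_self]
  have h1 := CT_rat (Bf (n₀ + n₁) n₀) a b
  rw [hDy] at h1
  exact RatD.uniq h1 (RHS_rat n₀ n₁ a b) (fun k => RHS_ne _ k) (b + 1)
    (fun k hk => F_large n₀ n₁ a b k hn (by omega) (by omega)) k
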